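/- arXiv:2012.00311 — 5 statements merged into one kernel-verified Lean document; each statement's English description precedes it below -/
import Mathlib

section
/- Let G be a tree on n ≥ 4 vertices in which no vertex has degree 2 and which is not a star. Then the maximum integer k such that G admits a feasible agency with k agents and some time horizon T equals n − 3. -/
open SimpleGraph

/-- A walk with parking of time horizon `T` that visits every vertex and returns
to its starting vertex: a (traveling salesman) tour. -/
def AgencyTour {V : Type*} (G : SimpleGraph V) (T : ℕ) (a : ℕ → V) : Prop :=
  (∀ t < T, a t = a (t + 1) ∨ G.Adj (a t) (a (t + 1))) ∧
  (∀ v : V, ∃ t ≤ T, a t = v) ∧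
  a 0 = a T

/-- A feasible agency with `k` agents and time horizon `T`: each agent performs a
tour (with parking), and no two distinct agents crash in a node or in an edge. -/
def FeasibleAgency {V : Type*} (G : SimpleGraph V) (k T : ℕ) (a : Fin k → ℕ → V) : Prop :=
  (∀ i, AgencyTour G T (a i)) ∧
  ∀ i j : Fin k, i ≠ j →
    (∀ t ≤ T, a i t ≠ a j t) ∧
    (∀ t < T, ¬(a i t = a j (t + 1) ∧ a i (t + 1) = a j t ∧ a i t ≠ a i (t + 1)))

namespace Agency

variable {V : Type*}

/-! ### Upper bound -/

/-- The side of `i` after the edge `w i` has been removed. -/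
def side (G : SimpleGraph V) (w i : V) : Set V :=
  {x | (G.deleteEdges {s(w, i)}).Reachable i x}

lemma side_self (G : SimpleGraph V) (w i : V) : i ∈ side G w i := Reachable.refl _

lemma side_not {G : SimpleGraph V} (hG : G.IsTree) {w i : V} (h : G.Adj w i) :
    w ∉ side G w i := by
  intro hw
  have hb := (isAcyclic_iff_forall_adj_isBridge.1 hG.isAcyclic) h
  rw [isBridge_iff] at hb
  exact hb hw.symm

lemma side_step {G : SimpleGraph V} {w i x y : V} (hx : x ∈ side G w i) (h : G.Adj x y)
    (hne : s(x, y) ≠ s(w, i)) : y ∈ side G w i := by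
  have h1 : (G.deleteEdges {s(w, i)}).Adj x y := by
    rw [deleteEdges_adj]; exact ⟨h, by simpa using hne⟩
  exact Reachable.trans hx h1.reachable

lemma side_cross {G : SimpleGraph V} (hG : G.IsTree) {w i x y : V} (hwi : G.Adj w i)
    (hx : x ∈ side G w i) (h : G.Adj x y) (hy : y ∉ side G w i) : x = i ∧ y = w := by
  by_contra hc
  apply hy
  apply side_step hx h
  intro he
  rw [Sym2.eq_iff] at he
  rcases he with ⟨rfl, rfl⟩ | ⟨rfl, rfl⟩
  · exact side_not hG hwi hx
  · exact hc ⟨rfl, rfl⟩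

lemma reach_ind {G : SimpleGraph V} {P : V → Prop} {a b : V} (hab : G.Reachable a b) (ha : P a)
    (hs : ∀ x y, P x → G.Adj x y → P y) : P b := by
  obtain ⟨q⟩ := hab
  induction q with
  | nil => exact ha
  | cons h _ ih => exact ih (hs _ _ ha h)

lemma side_cover {G : SimpleGraph V} (hG : G.IsTree) {w i : V} (hwi : G.Adj w i) (x : V) :
    x ∈ side G w i ∨ x ∈ side G i w := by
  refine reach_ind (P := fun x => x ∈ side G w i ∨ x ∈ side G i w)
    (hG.connected.preconnected i x) (Or.inl (side_self G w i)) ?_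
  rintro x y (hx | hx) h
  · by_cases hy : y ∈ side G w i
    · exact Or.inl hy
    · obtain ⟨-, rfl⟩ := side_cross hG hwi hx h hy
      exact Or.inr (side_self G i _)
  · by_cases hy : y ∈ side G i w
    · exact Or.inr hy
    · obtain ⟨-, rfl⟩ := side_cross hG hwi.symm hx h hy
      exact Or.inl (side_self G w _)

lemma side_sub {G : SimpleGraph V} (hG : G.IsTree) {w i j : V} (hwi : G.Adj w i)
    (hwj : G.Adj w j) (hij : i ≠ j) {x : V} (hx : x ∈ side G w i) : x ∈ side G j w := by
  have hi : i ∈ side G j w := by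
    apply side_step (side_self G j w) hwi
    intro he
    rw [Sym2.eq_iff] at he
    rcases he with ⟨h1, h2⟩ | ⟨h1, h2⟩
    · exact hwj.ne h1
    · exact hij h2
  refine (reach_ind (P := fun x => x ∈ side G w i ∧ x ∈ side G j w) hx
    ⟨side_self G w i, hi⟩ ?_).2
  rintro x y ⟨hx1, hx2⟩ h
  have hy1 : y ∈ side G w i := Reachable.trans hx1 h.reachable
  refine ⟨hy1, ?_⟩
  by_contra hy
  have h' : G.Adj x y := (deleteEdges_le _) h
  obtain ⟨rfl, -⟩ := side_cross hG hwj.symm hx2 h' hy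
  exact side_not hG hwi hx1

lemma side_disj {G : SimpleGraph V} (hG : G.IsTree) {w i : V} (hwi : G.Adj w i) {x : V}
    (hx : x ∈ side G w i) : x ∉ side G i w := by
  intro hx2
  have : w ∈ side G w i := by
    refine Reachable.trans hx ?_
    have := Reachable.symm hx2
    rwa [Sym2.eq_swap] at this
  exact side_not hG hwi this

open Classical in
/-- number of holes on the side `S` -/
noncomputable def holes [Fintype V] {k : ℕ} (c : Fin k → V) (S : Set V) : ℕ :=
  (Finset.univ.filter (fun x => x ∈ S ∧ ∀ j, c j ≠ x)).card

open Classical in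
lemma holes_count [Fintype V] {k : ℕ} (c : Fin k → V) (hc : Function.Injective c) (S : Set V) :
    holes c S + (Finset.univ.filter (fun j => c j ∈ S)).card
      = (Finset.univ.filter (fun x => x ∈ S)).card := by
  have h1 : (Finset.univ.filter (fun j => c j ∈ S)).card
      = (Finset.univ.filter (fun x => x ∈ S ∧ ¬ ∀ j, c j ≠ x)).card := by
    rw [← Finset.card_image_of_injective _ hc]
    congr 1
    ext x
    simp only [Finset.mem_image, Finset.mem_filter, Finset.mem_univ, true_and]
    push Not
    constructor
    · rintro ⟨j, hj, rfl⟩; exact ⟨hj, j, rfl⟩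
    · rintro ⟨hj, j, rfl⟩; exact ⟨j, hj, rfl⟩
  rw [h1, holes, ← Finset.filter_filter, ← Finset.filter_filter]
  exact Finset.card_filter_add_card_filter_not _

lemma holes_compl [Fintype V] {G : SimpleGraph V} (hG : G.IsTree) {k : ℕ} (c : Fin k → V)
    (hc : Function.Injective c) (hk : k + 2 = Fintype.card V) {w i : V} (hwi : G.Adj w i) :
    holes c (side G w i) + holes c (side G i w) = 2 := by
  classical
  have h0 := holes_count c hc Set.univ
  simp only [Set.mem_univ, Finset.filter_true, Finset.card_univ, Fintype.card_fin] at h0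
  have : holes c (side G w i) + holes c (side G i w) = holes c Set.univ := by
    unfold holes
    rw [← Finset.card_union_of_disjoint]
    · congr 1
      ext x
      have := side_cover hG hwi x
      simp only [Finset.mem_union, Finset.mem_filter, Finset.mem_univ, true_and, Set.mem_univ]
      tauto
    · rw [Finset.disjoint_left]
      intro x hx hx2
      simp only [Finset.mem_filter] at hx hx2
      exact side_disj hG hwi hx.2.1 hx2.2.1
  omega

lemma holes_mono [Fintype V] {k : ℕ} (c : Fin k → V) {S S' : Set V} (h : S ⊆ S') :
    holes c S ≤ holes c S' := by
  classical
  unfold holes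
  apply Finset.card_le_card
  intro x hx
  simp only [Finset.mem_filter, Finset.mem_univ, true_and] at hx ⊢
  exact ⟨h hx.1, hx.2⟩

/-- `h` is the home of the agent `p`. -/
def Home [Fintype V] (G : SimpleGraph V) {k : ℕ} (c : Fin k → V) (p : Fin k) (h : V) : Prop :=
  (c p = h ∧ ∀ i, G.Adj h i → holes c (side G h i) ≤ 1) ∨
  (G.Adj (c p) h ∧ holes c (side G (c p) h) = 2)

lemma home_exists [Fintype V] {G : SimpleGraph V} (hG : G.IsTree) {k : ℕ} (c : Fin k → V)
    (hc : Function.Injective c) (hk : k + 2 = Fintype.card V) (p : Fin k) : ∃ h, Home G c p h := by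
  by_cases hh : ∀ i, G.Adj (c p) i → holes c (side G (c p) i) ≤ 1
  · exact ⟨c p, Or.inl ⟨rfl, hh⟩⟩
  · push Not at hh
    obtain ⟨i, hi, h2⟩ := hh
    have := holes_compl hG c hc hk hi
    exact ⟨i, Or.inr ⟨hi, by omega⟩⟩

lemma home_step [Fintype V] {G : SimpleGraph V} (hG : G.IsTree) {k : ℕ} (c d : Fin k → V)
    (hc : Function.Injective c) (hd : Function.Injective d)
    (hk : k + 2 = Fintype.card V) (p : Fin k) (h : V)
    (hmove : ∀ j, c j = d j ∨ G.Adj (c j) (d j))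
    (hswap : ∀ i j, i ≠ j → ¬ (c i = d j ∧ d i = c j ∧ c i ≠ d i))
    (hh : Home G c p h) : Home G d p h := by
  classical
  by_cases hp : c p = d p
  · have key : ∀ i, G.Adj (c p) i → holes d (side G (c p) i) = holes c (side G (c p) i) := by
      intro i hi
      have h1 := holes_count c hc (side G (c p) i)
      have h2 := holes_count d hd (side G (c p) i)
      have h3 : (Finset.univ.filter (fun j => c j ∈ side G (c p) i))
          = (Finset.univ.filter (fun j => d j ∈ side G (c p) i)) := by
        ext j
        simp only [Finset.mem_filter, Finset.mem_univ, true_and]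
        rcases hmove j with hj | hj
        · rw [hj]
        · constructor
          · intro h4
            by_contra h5
            have := (side_cross hG hi h4 hj h5).2
            rw [hp] at this
            obtain rfl := hd this
            exact hj.ne hp
          · intro h4
            by_contra h5
            have := (side_cross hG hi h4 hj.symm h5).2
            obtain rfl := hc this
            exact hj.ne hp
      rw [h3] at h1
      omega
    rcases hh with ⟨rfl, hh⟩ | ⟨h1, h2⟩
    · left
      refine ⟨hp.symm, fun i hi => ?_⟩
      rw [key i hi]; exact hh i hi
    · right
      rw [← hp]
      exact ⟨h1, by rw [key _ h1, h2]⟩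
  · have hadj : G.Adj (c p) (d p) := (hmove p).resolve_left hp
    have key : holes c (side G (c p) (d p)) = holes d (side G (c p) (d p)) + 1 := by
      have h1 := holes_count c hc (side G (c p) (d p))
      have h2 := holes_count d hd (side G (c p) (d p))
      have h3 : (Finset.univ.filter (fun j => d j ∈ side G (c p) (d p)))
          = insert p (Finset.univ.filter (fun j => c j ∈ side G (c p) (d p))) := by
        ext j
        simp only [Finset.mem_filter, Finset.mem_univ, true_and, Finset.mem_insert]
        by_cases hjp : j = p
        · subst hjp
          simp [side_self]
        simp only [hjp, false_or]
        rcases hmove j with hj | hj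
        · rw [hj]
        · constructor
          · intro h4
            by_contra h5
            have := (side_cross hG hadj h4 hj.symm h5).2
            exact hjp (hc this)
          · intro h4
            by_contra h5
            obtain ⟨h6, h7⟩ := side_cross hG hadj h4 hj h5
            exact hswap j p hjp ⟨h6, h7, hj.ne⟩
      have h4 : p ∉ (Finset.univ.filter (fun j => c j ∈ side G (c p) (d p))) := by
        simp only [Finset.mem_filter, Finset.mem_univ, true_and]
        exact side_not hG hadj
      rw [h3, Finset.card_insert_of_notMem h4] at h2
      omega
    have hcc := holes_compl hG c hc hk hadj
    have hcd := holes_compl hG d hd hk hadj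
    rcases hh with ⟨rfl, hh⟩ | ⟨h1, h2⟩
    · right
      refine ⟨hadj.symm, ?_⟩
      have := hh _ hadj
      omega
    · by_cases hdh : d p = h
      · left
        refine ⟨hdh, ?_⟩
        subst hdh
        intro i hi
        by_cases hi2 : i = c p
        · subst hi2
          omega
        · have := holes_mono d (fun x hx => side_sub hG hi hadj.symm hi2 hx :
            side G (d p) i ⊆ side G (c p) (d p))
          omega
      · exfalso
        have h3 := holes_mono c (fun x hx => side_sub hG h1 hadj (Ne.symm hdh) hx :
            side G (c p) h ⊆ side G (d p) (c p))
        omega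

lemma upper [Fintype V] {G : SimpleGraph V} (hG : G.IsTree) (hn : 4 ≤ Fintype.card V)
    (hnotstar : ¬ ∃ c : V, ∀ v : V, v ≠ c → G.Adj c v) {k T : ℕ} (a : Fin k → ℕ → V)
    (hk : k + 2 = Fintype.card V) (ha : FeasibleAgency G k T a) : False := by
  obtain ⟨ht, hf⟩ := ha
  have hinj : ∀ t ≤ T, Function.Injective (fun j => a j t) := by
    intro t ht i j hij
    by_contra hne
    exact (hf i j hne).1 t ht hij
  have p : Fin k := ⟨0, by omega⟩
  obtain ⟨h, hh⟩ := home_exists hG (fun j => a j 0) (hinj 0 (Nat.zero_le _)) hk p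
  have hall : ∀ t ≤ T, Home G (fun j => a j t) p h := by
    intro t
    induction t with
    | zero => intro _; exact hh
    | succ t ih =>
      intro hle
      refine home_step hG _ _ (hinj t (by omega)) (hinj (t+1) hle) hk p h ?_ ?_ (ih (by omega))
      · intro j; exact (ht j).1 t (by omega)
      · intro i j hij; exact (hf i j hij).2 t (by omega)
  apply hnotstar
  refine ⟨h, fun v hv => ?_⟩
  obtain ⟨t, hle, rfl⟩ := (ht p).2.1 v
  rcases hall t hle with ⟨h1, -⟩ | ⟨h1, -⟩
  · exact absurd h1 hv
  · exact h1.symm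

/-! ### Lower bound -/

/-- one agent moves to an adjacent empty vertex -/
def Step (G : SimpleGraph V) {k : ℕ} (c d : Fin k → V) : Prop :=
  ∃ j, G.Adj (c j) (d j) ∧ (∀ i, i ≠ j → d i = c i) ∧
    (∀ i, c i ≠ d j)

/-- reachability of configurations -/
def Reach (G : SimpleGraph V) {k : ℕ} : (Fin k → V) → (Fin k → V) → Prop :=
  Relation.ReflTransGen (Step G)

lemma Step.inj {G : SimpleGraph V} {k : ℕ} {c d : Fin k → V} (h : Step G c d)
    (hc : Function.Injective c) : Function.Injective d := by
  obtain ⟨j, h1, h2, h3⟩ := h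
  intro x y hxy
  by_cases hx : x = j <;> by_cases hy : y = j
  · rw [hx, hy]
  · subst hx; rw [h2 y hy] at hxy; exact absurd hxy.symm (h3 y)
  · subst hy; rw [h2 x hx] at hxy; exact absurd hxy (h3 x)
  · rw [h2 x hx, h2 y hy] at hxy; exact hc hxy

lemma Step.symm {G : SimpleGraph V} {k : ℕ} {c d : Fin k → V} (hc : Function.Injective c)
    (h : Step G c d) : Step G d c := by
  obtain ⟨j, h1, h2, h3⟩ := h
  refine ⟨j, h1.symm, fun i hi => (h2 i hi).symm, fun i hi => ?_⟩
  by_cases hij : i = j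
  · subst hij; exact h1.ne hi.symm
  · rw [h2 i hij] at hi; exact hij (hc hi)

lemma Reach.inj {G : SimpleGraph V} {k : ℕ} {c d : Fin k → V} (h : Reach G c d)
    (hc : Function.Injective c) : Function.Injective d := by
  induction h with
  | refl => exact hc
  | tail _ h ih => exact h.inj ih

lemma Reach.symm {G : SimpleGraph V} {k : ℕ} {c d : Fin k → V} (h : Reach G c d)
    (hc : Function.Injective c) : Reach G d c := by
  induction h with
  | refl => exact Relation.ReflTransGen.refl
  | tail h1 h ih => exact Relation.ReflTransGen.head (h.symm (Reach.inj h1 hc)) ih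

/-- an empty vertex -/
def Hole {k : ℕ} (c : Fin k → V) (x : V) : Prop := ∀ j, c j ≠ x

lemma move {G : SimpleGraph V} {k : ℕ} {c : Fin k → V} (hc : Function.Injective c) (j : Fin k)
    {y : V} (hy : Hole c y) (h : G.Adj (c j) y) :
    ∃ d : Fin k → V, Reach G c d ∧ Function.Injective d ∧ d j = y ∧ (∀ i, i ≠ j → d i = c i) ∧
      (∀ x, Hole d x ↔ x = c j ∨ (Hole c x ∧ x ≠ y)) := by
  classical
  have hne : ∀ i, i ≠ j → Function.update c j y i = c i := fun i hi => by simp [hi]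
  have hs : Step G c (Function.update c j y) :=
    ⟨j, by simpa using h, hne, by rw [Function.update_self]; exact hy⟩
  refine ⟨Function.update c j y, Relation.ReflTransGen.single hs, hs.inj hc, by simp, hne, ?_⟩
  intro x
  constructor
  · intro hx
    by_cases hxj : x = c j
    · exact Or.inl hxj
    · right
      refine ⟨fun i hi => ?_, fun hxy => hx j (by simp [hxy])⟩
      by_cases hij : i = j
      · subst hij; exact hxj hi.symm
      · exact hx i (by rw [hne i hij, hi])
  · rintro (rfl | ⟨h1, h2⟩) i hi
    · by_cases hij : i = j
      · subst hij
        simp only [Function.update_self] at hi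
        exact h.ne hi.symm
      · rw [hne i hij] at hi; exact hij (hc hi)
    · by_cases hij : i = j
      · subst hij
        simp only [Function.update_self] at hi
        exact h2 hi.symm
      · rw [hne i hij] at hi; exact h1 i hi

/-- connectivity in `G - u` -/
def Conn (G : SimpleGraph V) (u : V) : V → V → Prop :=
  Relation.ReflTransGen (fun x y => G.Adj x y ∧ x ≠ u ∧ y ≠ u)

lemma Conn.symm {G : SimpleGraph V} {u x y : V} (h : Conn G u x y) : Conn G u y x := by
  induction h with
  | refl => exact Relation.ReflTransGen.refl
  | tail _ h ih => exact Relation.ReflTransGen.head ⟨h.1.symm, h.2.2, h.2.1⟩ ih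

lemma Conn.trans {G : SimpleGraph V} {u x y z : V} (h : Conn G u x y) (h' : Conn G u y z) :
    Conn G u x z := Relation.ReflTransGen.trans h h'

lemma conn_nbr {G : SimpleGraph V} (hG : G.Connected) {u x : V} (hx : x ≠ u) :
    ∃ w, G.Adj u w ∧ Conn G u w x := by
  have : x = u ∨ ∃ w, G.Adj u w ∧ Conn G u w x := by
    refine reach_ind (P := fun x => x = u ∨ ∃ w, G.Adj u w ∧ Conn G u w x)
      (hG.preconnected u x) (Or.inl rfl) ?_
    rintro x y hx h
    by_cases hy : y = u
    · exact Or.inl hy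
    right
    by_cases hxu : x = u
    · subst hxu
      exact ⟨y, h, Relation.ReflTransGen.refl⟩
    · obtain ⟨w, h1, h2⟩ := hx.resolve_left hxu
      exact ⟨w, h1, Relation.ReflTransGen.tail h2 ⟨h, hxu, hy⟩⟩
  exact this.resolve_left hx

lemma replace {G : SimpleGraph V} {k : ℕ} {u h t : V} {p : Fin k} (hht : Conn G u h t) :
    ∀ c : Fin k → V, Function.Injective c → c p = u → Hole c h → ¬ Hole c t →
    ∃ d : Fin k → V, Reach G c d ∧ Function.Injective d ∧ d p = u ∧
      ∀ x, Hole d x ↔ x = t ∨ (Hole c x ∧ x ≠ h) := by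
  induction hht using Relation.ReflTransGen.head_induction_on with
  | refl => intro c _ _ h1 h2; exact absurd h1 h2
  | @head h h1 hs _ ih =>
    intro c hc hp hh ht
    obtain ⟨hadj, hhu, h1u⟩ := hs
    by_cases hh1 : Hole c h1
    · obtain ⟨d, hd1, hd2, hd3, hd4⟩ := ih c hc hp hh1 ht
      have h1t : h1 ≠ t := by rintro rfl; exact ht hh1
      have hnh : ¬ Hole d h1 := by rw [hd4]; simp [h1t]
      have hdh : Hole d h := by rw [hd4]; exact Or.inr ⟨hh, hadj.ne⟩
      have : ∃ j, d j = h1 := by simpa [Hole] using hnh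
      obtain ⟨j, hj⟩ := this
      obtain ⟨e, he1, he2, he3, he4, he5⟩ := move (G := G) hd2 j hdh (by rw [hj]; exact hadj.symm)
      refine ⟨e, Relation.ReflTransGen.trans hd1 he1, he2, ?_, ?_⟩
      · rw [he4, hd3]
        rintro rfl
        exact h1u (by rw [← hj, hd3])
      · intro x
        rw [he5, hd4, hj]
        have hth : t ≠ h := by rintro rfl; exact ht hh
        constructor
        · rintro (rfl | ⟨rfl | ⟨h5, h6⟩, h7⟩)
          · exact Or.inr ⟨hh1, hadj.ne'⟩
          · exact Or.inl rfl
          · exact Or.inr ⟨h5, h7⟩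
        · rintro (rfl | ⟨h5, h6⟩)
          · exact Or.inr ⟨Or.inl rfl, hth⟩
          · by_cases hx : x = h1
            · exact Or.inl hx
            · exact Or.inr ⟨Or.inr ⟨h5, hx⟩, h6⟩
    · have : ∃ j, c j = h1 := by simpa [Hole] using hh1
      obtain ⟨j, hj⟩ := this
      obtain ⟨e, he1, he2, he3, he4, he5⟩ := move (G := G) hc j hh (by rw [hj]; exact hadj.symm)
      have hep : e p = u := by
        rw [he4, hp]
        rintro rfl
        exact h1u (by rw [← hj, hp])
      have heh1 : Hole e h1 := by rw [he5]; exact Or.inl hj.symm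
      by_cases h1t : h1 = t
      · subst h1t
        refine ⟨e, he1, he2, hep, ?_⟩
        intro x; rw [he5, hj]
      · have het : ¬ Hole e t := by
          rw [he5, hj]; rintro (h5 | h5)
          · exact h1t h5.symm
          · exact ht h5.1
        obtain ⟨d, hd1, hd2, hd3, hd4⟩ := ih e he2 hep heh1 het
        refine ⟨d, Relation.ReflTransGen.trans he1 hd1, hd2, hd3, ?_⟩
        intro x
        rw [hd4, he5, hj]
        constructor
        · rintro (rfl | ⟨rfl | ⟨h5, h6⟩, h7⟩)
          · exact Or.inl rfl
          · exact absurd rfl h7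
          · exact Or.inr ⟨h5, h6⟩
        · rintro (rfl | ⟨h5, h6⟩)
          · exact Or.inl rfl
          · refine Or.inr ⟨Or.inr ⟨h5, h6⟩, ?_⟩
            rintro rfl; exact hh1 h5

/-- Move holes in place: the hole `h` is moved to `t` (if `t` is not yet empty). -/
lemma place {G : SimpleGraph V} {k : ℕ} {u h t : V} {p : Fin k} (hht : Conn G u h t)
    (c : Fin k → V) (hc : Function.Injective c) (hp : c p = u) (hh : Hole c h) :
    ∃ d : Fin k → V, Reach G c d ∧ Function.Injective d ∧ d p = u ∧ Hole d t ∧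
      ((∀ x, Hole d x ↔ Hole c x) ∨ (∀ x, Hole d x ↔ x = t ∨ (Hole c x ∧ x ≠ h))) := by
  by_cases ht : Hole c t
  · exact ⟨c, Relation.ReflTransGen.refl, hc, hp, ht, Or.inl fun _ => Iff.rfl⟩
  · obtain ⟨d, h1, h2, h3, h4⟩ := replace hht c hc hp hh ht
    exact ⟨d, h1, h2, h3, (h4 t).2 (Or.inl rfl), Or.inr h4⟩

/-- case two: holes at two neighbours of `u` -/
lemma spider {G : SimpleGraph V} {k : ℕ} {u v w z : V} {p : Fin k}
    (c : Fin k → V) (hc : Function.Injective c) (hp : c p = u) (huv : G.Adj u v)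
    (huw : G.Adj u w) (huz : G.Adj u z) (hwz : w ≠ z) (hw : Hole c w) (hz : Hole c z) :
    ∃ d : Fin k → V, Reach G c d ∧ Function.Injective d ∧ d p = v ∧
      ∀ x, x ≠ u → x ≠ v → x ≠ z → Hole c x → Hole d x := by
  by_cases hv : Hole c v
  · obtain ⟨d, h1, h2, h3, h4, h5⟩ := move (G := G) hc p hv (by rw [hp]; exact huv)
    refine ⟨d, h1, h2, h3, fun x hxu hxv hxz hx => ?_⟩
    rw [h5]; exact Or.inr ⟨hx, hxv⟩
  · obtain ⟨q, hq⟩ : ∃ q, c q = v := by simpa [Hole] using hv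
    have hqp : q ≠ p := by rintro rfl; exact huv.ne (by rw [← hp, hq])
    have hwv : v ≠ w := by rintro rfl; exact hv hw
    have hzv : v ≠ z := by rintro rfl; exact hv hz
    -- p to w
    obtain ⟨c1, r1, i1, a1, b1, e1⟩ := move (G := G) hc p hw (by rw [hp]; exact huw)
    have hq1 : c1 q = v := by rw [b1 q hqp, hq]
    -- q to u
    obtain ⟨c2, r2, i2, a2, b2, e2⟩ := move (G := G) (y := u) i1 q
      (by rw [e1]; exact Or.inl hp.symm) (by rw [hq1]; exact huv.symm)
    -- q to z
    obtain ⟨c3, r3, i3, a3, b3, e3⟩ := move (G := G) (y := z) i2 q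
      (by rw [e2, e1]; exact Or.inr ⟨Or.inr ⟨hz, hwz.symm⟩, huz.ne'⟩) (by rw [a2]; exact huz)
    have hp3 : c3 p = w := by rw [b3 p hqp.symm, b2 p hqp.symm, a1]
    -- p to u
    obtain ⟨c4, r4, i4, a4, b4, e4⟩ := move (G := G) (y := u) i3 p
      (by rw [e3]; exact Or.inl a2.symm) (by rw [hp3]; exact huw.symm)
    -- p to v
    obtain ⟨c5, r5, i5, a5, b5, e5⟩ := move (G := G) (y := v) i4 p
      (by
        rw [e4, e3, e2]
        exact Or.inr ⟨Or.inr ⟨Or.inl hq1.symm, hzv⟩, huv.ne'⟩)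
      (by rw [a4]; exact huv)
    refine ⟨c5, ((((r1.trans r2).trans r3).trans r4).trans r5), i5, a5, ?_⟩
    intro x hxu hxv hxz hx
    rw [e5, e4, e3, e2, e1, hp3]
    by_cases hxw : x = w
    · tauto
    · tauto

open Classical in
lemma card_holes [Fintype V] {k : ℕ} (c : Fin k → V) (hc : Function.Injective c)
    (hk : k + 3 = Fintype.card V) : (Finset.univ.filter (fun x => Hole c x)).card = 3 := by
  have h := holes_count c hc Set.univ
  simp only [Set.mem_univ, Finset.filter_true, Finset.card_univ, Fintype.card_fin] at h
  have h2 : holes c Set.univ = (Finset.univ.filter (fun x => Hole c x)).card := by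
    unfold holes
    congr 1
    ext x
    simp only [Finset.mem_filter, Finset.mem_univ, true_and, Set.mem_univ]
    exact Iff.rfl
  omega

lemma exists_hole [Fintype V] {k : ℕ} (c : Fin k → V) (hc : Function.Injective c)
    (hk : k + 3 = Fintype.card V) (x y : V) : ∃ z, Hole c z ∧ z ≠ x ∧ z ≠ y := by
  classical
  have h := card_holes c hc hk
  have h2 : ({x, y} : Finset V).card < (Finset.univ.filter (fun x => Hole c x)).card := by
    rw [h]; exact lt_of_le_of_lt Finset.card_le_two (by norm_num)
  obtain ⟨z, hz1, hz2⟩ := Finset.exists_mem_notMem_of_card_lt_card h2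
  simp only [Finset.mem_filter, Finset.mem_univ, true_and, Finset.mem_insert,
    Finset.mem_singleton, not_or] at hz1 hz2
  exact ⟨z, hz1, hz2⟩

lemma advance [Fintype V] (G : SimpleGraph V) [DecidableRel G.Adj]
    (hG : G.IsTree) (hdeg : ∀ v : V, G.degree v ≠ 2) {k : ℕ} (hk : k + 3 = Fintype.card V)
    (c : Fin k → V) (hc : Function.Injective c) (p : Fin k) (v : V) (hv : G.Adj (c p) v) :
    ∃ d : Fin k → V, Reach G c d ∧ d p = v := by
  classical
  obtain ⟨u, hp⟩ : ∃ u, c p = u := ⟨_, rfl⟩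
  rw [hp] at hv
  by_cases hcase : ∃ h h', Hole c h ∧ Hole c h' ∧ ¬ Conn G u h h'
  · obtain ⟨h, h', hh, hh', hn⟩ := hcase
    obtain ⟨w, hw1, hw2⟩ := conn_nbr hG.connected (u := u) (x := h)
      (by rintro rfl; exact hh p hp)
    obtain ⟨z, hz1, hz2⟩ := conn_nbr hG.connected (u := u) (x := h')
      (by rintro rfl; exact hh' p hp)
    obtain ⟨d, d1, d2, d3, d4, d5⟩ := place hw2.symm c hc hp hh
    have hdh' : Hole d h' := by
      have : h' ≠ h := by rintro rfl; exact hn Relation.ReflTransGen.refl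
      rcases d5 with d5 | d5 <;> rw [d5]
      · exact hh'
      · exact Or.inr ⟨hh', this⟩
    obtain ⟨e, e1, e2, e3, e4, e5⟩ := place hz2.symm d d2 d3 hdh'
    have hew : Hole e w := by
      have : w ≠ h' := by rintro rfl; exact hn hw2.symm
      rcases e5 with e5 | e5 <;> rw [e5]
      · exact d4
      · exact Or.inr ⟨d4, this⟩
    have hwz : w ≠ z := by
      rintro rfl; exact hn (hw2.symm.trans hz2)
    obtain ⟨f, f1, f2, f3, -⟩ := spider e e2 e3 hv hw1 hz1 hwz hew e4
    exact ⟨f, (d1.trans e1).trans f1, f3⟩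
  · push Not at hcase
    obtain ⟨h, hh, -, -⟩ := exists_hole c hc hk u u
    obtain ⟨w, hw1, hw2⟩ := conn_nbr hG.connected (u := u) (x := h)
      (by rintro rfl; exact hh p hp)
    have hall : ∀ x, Hole c x → Conn G u x w := fun x hx => (hcase x h hx hh).trans hw2.symm
    -- place a hole at w
    obtain ⟨c1, r1, i1, p1, w1, q1⟩ := place hw2.symm c hc hp hh
    have hall1 : ∀ x, Hole c1 x → Conn G u x w := by
      intro x hx
      rcases q1 with q1 | q1 <;> rw [q1] at hx
      · exact hall x hx
      · rcases hx with rfl | hx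
        · exact Relation.ReflTransGen.refl
        · exact hall x hx.1
    -- two further neighbours of w
    obtain ⟨h2, hh2, hne, -⟩ := exists_hole c1 i1 hk w w
    obtain ⟨x, hx1, hxu⟩ : ∃ x, G.Adj w x ∧ x ≠ u := by
      have := (hall1 h2 hh2).symm
      rcases Relation.ReflTransGen.cases_head this with rfl | ⟨x, hx, -⟩
      · exact absurd rfl hne
      · exact ⟨x, hx.1, hx.2.2⟩
    obtain ⟨y, hy1, hyu, hyx⟩ : ∃ y, G.Adj w y ∧ y ≠ u ∧ y ≠ x := by
      have hsub : ({u, x} : Finset V) ⊆ G.neighborFinset w := by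
        intro b hb
        simp only [Finset.mem_insert, Finset.mem_singleton] at hb
        rw [mem_neighborFinset]
        rcases hb with rfl | rfl
        · exact hw1.symm
        · exact hx1
      have hc2 : ({u, x} : Finset V).card = 2 := Finset.card_pair hxu.symm
      have hlt : ({u, x} : Finset V).card < (G.neighborFinset w).card := by
        refine lt_of_le_of_ne (Finset.card_le_card hsub) ?_
        rw [hc2, card_neighborFinset_eq_degree]
        exact (hdeg w).symm
      obtain ⟨y, hy1, hy2⟩ := Finset.exists_mem_notMem_of_card_lt_card hlt
      simp only [Finset.mem_insert, Finset.mem_singleton, not_or] at hy2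
      exact ⟨y, by simpa using hy1, hy2⟩
    have hwx : Conn G u w x := Relation.ReflTransGen.single ⟨hx1, hw1.ne', hxu⟩
    have hwy : Conn G u w y := Relation.ReflTransGen.single ⟨hy1, hw1.ne', hyu⟩
    obtain ⟨c2, r2, i2, p2, x2, q2⟩ := place ((hall1 h2 hh2).trans hwx) c1 i1 p1 hh2
    have w2 : Hole c2 w := by
      rcases q2 with q2 | q2 <;> rw [q2]
      · exact w1
      · exact Or.inr ⟨w1, hne.symm⟩
    have hall2 : ∀ x, Hole c2 x → Conn G u x w := by
      intro b hb
      rcases q2 with q2 | q2 <;> rw [q2] at hb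
      · exact hall1 b hb
      · rcases hb with rfl | hb
        · exact hwx.symm
        · exact hall1 b hb.1
    obtain ⟨h3, hh3, hne3, hne3'⟩ := exists_hole c2 i2 hk w x
    obtain ⟨c3, r3, i3, p3, y3, q3⟩ := place ((hall2 h3 hh3).trans hwy) c2 i2 p2 hh3
    have w3 : Hole c3 w := by
      rcases q3 with q3 | q3 <;> rw [q3]
      · exact w2
      · exact Or.inr ⟨w2, hne3.symm⟩
    have x3 : Hole c3 x := by
      rcases q3 with q3 | q3 <;> rw [q3]
      · exact x2
      · exact Or.inr ⟨x2, hne3'.symm⟩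
    have r := (r1.trans r2).trans r3
    by_cases hv3 : Hole c3 v
    · obtain ⟨d, d1, -, d3, -⟩ := move (G := G) i3 p hv3 (by rw [p3]; exact hv)
      exact ⟨d, r.trans d1, d3⟩
    obtain ⟨q, hq⟩ : ∃ q, c3 q = v := by simpa [Hole] using hv3
    have hqp : q ≠ p := by rintro rfl; exact hv.ne (by rw [← p3, hq])
    have hvw : v ≠ w := by rintro rfl; exact hv3 w3
    have hvx : v ≠ x := by rintro rfl; exact hv3 x3
    have hvy : v ≠ y := by rintro rfl; exact hv3 y3
    -- p to w
    obtain ⟨c4, r4, i4, a4, b4, e4⟩ := move (G := G) i3 p w3 (by rw [p3]; exact hw1)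
    have hq4 : c4 q = v := by rw [b4 q hqp, hq]
    -- q to u
    obtain ⟨c5, r5, i5, a5, b5, e5⟩ := move (G := G) (y := u) i4 q
      (by rw [e4]; exact Or.inl p3.symm) (by rw [hq4]; exact hv.symm)
    have hp5 : c5 p = w := by rw [b5 p hqp.symm, a4]
    have x5 : Hole c5 x := by
      rw [e5, e4]; exact Or.inr ⟨Or.inr ⟨x3, hx1.ne'⟩, hxu⟩
    have y5 : Hole c5 y := by
      rw [e5, e4]; exact Or.inr ⟨Or.inr ⟨y3, hy1.ne'⟩, hyu⟩
    have v5 : Hole c5 v := by rw [e5]; exact Or.inl hq4.symm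
    obtain ⟨c6, r6, i6, a6, e6⟩ := spider c5 i5 hp5 hw1.symm hx1 hy1 hyx.symm x5 y5
    have v6 : Hole c6 v := e6 v hvw hv.ne' hvy v5
    obtain ⟨c7, r7, i7, a7, -⟩ := move (G := G) i6 p v6 (by rw [a6]; exact hv)
    exact ⟨c7, (((r.trans r4).trans r5).trans r6).trans r7, a7⟩

lemma goto [Fintype V] (G : SimpleGraph V) [DecidableRel G.Adj]
    (hG : G.IsTree) (hdeg : ∀ v : V, G.degree v ≠ 2) {k : ℕ} (hk : k + 3 = Fintype.card V)
    (c : Fin k → V) (hc : Function.Injective c) (p : Fin k) (v : V) :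
    ∃ d : Fin k → V, Reach G c d ∧ d p = v := by
  refine reach_ind (P := fun v => ∃ d : Fin k → V, Reach G c d ∧ d p = v)
    (hG.connected.preconnected (c p) v) ⟨c, Relation.ReflTransGen.refl, rfl⟩ ?_
  rintro x y ⟨d, h1, rfl⟩ h
  obtain ⟨e, h2, h3⟩ := advance G hG hdeg hk d (Reach.inj h1 hc) p y h
  exact ⟨e, Relation.ReflTransGen.trans h1 h2, h3⟩

/-- A sequence of steps from `c` to `d` -/
def Seq (G : SimpleGraph V) {k : ℕ} (c d : Fin k → V) (W : Fin k × V → Prop) : Prop :=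
  ∃ (T : ℕ) (s : ℕ → Fin k → V), s 0 = c ∧ s T = d ∧ (∀ t < T, Step G (s t) (s (t + 1))) ∧
    ∀ x, W x → ∃ t ≤ T, s t x.1 = x.2

lemma Seq.trans {G : SimpleGraph V} {k : ℕ} {c d e : Fin k → V} {W W' : Fin k × V → Prop}
    (h : Seq G c d W) (h' : Seq G d e W') : Seq G c e (fun x => W x ∨ W' x) := by
  obtain ⟨T, s, h0, hT, hs, hW⟩ := h
  obtain ⟨T', s', h0', hT', hs', hW'⟩ := h'
  have hlate : ∀ t, (fun t => if t ≤ T then s t else s' (t - T)) (T + t) = s' t := by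
    intro t
    by_cases ht : t = 0
    · subst ht; simp [hT, h0']
    · have : ¬ (T + t ≤ T) := by omega
      simp [ht]
  refine ⟨T + T', fun t => if t ≤ T then s t else s' (t - T), by simp [h0], ?_, ?_, ?_⟩
  · rw [← hT']; exact hlate T'
  · intro t ht
    by_cases h1 : t < T
    · have h2 : t ≤ T := by omega
      have h3 : t + 1 ≤ T := by omega
      simp only [h2, h3, if_true]
      exact hs t h1
    · obtain ⟨r, rfl⟩ : ∃ r, t = T + r := ⟨t - T, by omega⟩
      have h2 := hlate r
      have h3 := hlate (r + 1)
      rw [← Nat.add_assoc] at h3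
      rw [h2, h3]
      exact hs' r (by omega)
  · rintro x (hx | hx)
    · obtain ⟨t, ht, h1⟩ := hW x hx
      exact ⟨t, by omega, by simp [ht, h1]⟩
    · obtain ⟨t, ht, h1⟩ := hW' x hx
      refine ⟨T + t, by omega, ?_⟩
      rw [hlate t]; exact h1

lemma seq_of_reach {G : SimpleGraph V} {k : ℕ} {c d : Fin k → V} (h : Reach G c d) :
    Seq G c d (fun x => d x.1 = x.2) := by
  induction h with
  | refl => exact ⟨0, fun _ => c, rfl, rfl, by simp, fun x hx => ⟨0, le_rfl, hx⟩⟩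
  | @tail d e _ h ih =>
    have : Seq G d e (fun x => e x.1 = x.2) := by
      refine ⟨1, fun t => if t = 0 then d else e, by simp, by simp, ?_, ?_⟩
      · intro t ht
        obtain rfl : t = 0 := by omega
        simpa using h
      · intro x hx
        exact ⟨1, le_rfl, by simpa using hx⟩
    obtain ⟨T, s, h0, hT, hs, hW⟩ := ih.trans this
    exact ⟨T, s, h0, hT, hs, fun x hx => hW x (Or.inr hx)⟩

lemma Seq.reach {G : SimpleGraph V} {k : ℕ} {c d : Fin k → V} {W : Fin k × V → Prop}
    (h : Seq G c d W) : Reach G c d := by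
  obtain ⟨T, s, rfl, rfl, hs, -⟩ := h
  have : ∀ t ≤ T, Reach G (s 0) (s t) := by
    intro t
    induction t with
    | zero => intro _; exact Relation.ReflTransGen.refl
    | succ t ih => intro ht; exact Relation.ReflTransGen.tail (ih (by omega)) (hs t (by omega))
  exact this T le_rfl

lemma lower [Fintype V] (G : SimpleGraph V) [DecidableRel G.Adj]
    (hG : G.IsTree) (hdeg : ∀ v : V, G.degree v ≠ 2) {k : ℕ} (hk : k + 3 = Fintype.card V) :
    ∃ T : ℕ, ∃ a : Fin k → ℕ → V, FeasibleAgency G k T a := by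
  classical
  obtain ⟨c, hc⟩ : ∃ c : Fin k → V, Function.Injective c := by
    have : Nonempty (Fin k ↪ V) := Function.Embedding.nonempty_of_card_le (by simp; omega)
    obtain ⟨f⟩ := this
    exact ⟨f, f.injective⟩
  have hfin : ∀ W : Finset (Fin k × V), ∃ d, Seq G c d (fun x => x ∈ W) := by
    intro W
    induction W using Finset.induction_on with
    | empty => exact ⟨c, 0, fun _ => c, rfl, rfl, by simp, by simp⟩
    | insert x W _ ih =>
      obtain ⟨d, hd⟩ := ih
      obtain ⟨e, he1, he2⟩ := goto G hG hdeg hk d (Reach.inj hd.reach hc) x.1 x.2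
      obtain ⟨T, s, h0, hT, hs, hW⟩ := hd.trans (seq_of_reach he1)
      refine ⟨e, T, s, h0, hT, hs, fun y hy => hW y ?_⟩
      rcases Finset.mem_insert.1 hy with rfl | hy
      · exact Or.inr he2
      · exact Or.inl hy
  obtain ⟨d, hd⟩ := hfin Finset.univ
  obtain ⟨T, s, h0, hT, hs, hW⟩ := hd.trans (seq_of_reach (Reach.symm hd.reach hc))
  have hinj : ∀ t ≤ T, Function.Injective (s t) := by
    intro t
    induction t with
    | zero => intro _; rw [h0]; exact hc
    | succ t ih => intro ht; exact (hs t (by omega)).inj (ih (by omega))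
  refine ⟨T, fun i t => s t i, fun i => ⟨?_, ?_, ?_⟩, fun i j hij => ⟨?_, ?_⟩⟩
  · intro t ht
    obtain ⟨j, h1, h2, -⟩ := hs t ht
    by_cases hij : i = j
    · subst hij; exact Or.inr h1
    · exact Or.inl (h2 i hij).symm
  · intro v
    exact hW (i, v) (Or.inl (Finset.mem_univ _))
  · change s 0 i = s T i
    rw [h0, hT]
  · intro t ht h
    exact hij (hinj t ht h)
  · rintro t ht ⟨h1, h2, h3⟩
    obtain ⟨l, g1, g2, g3⟩ := hs t ht
    by_cases hil : i = l
    · subst hil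
      exact g3 j h2.symm
    · exact h3 (g2 i hil).symm

end Agency

/-- for a tree on `n ≥ 4` vertices with no vertex of degree 2 and
which is not a star, the maximum number of agents in a feasible agency (over all
time horizons) is `n - 3`. -/
theorem stmt13 {V : Type*} [Fintype V] (G : SimpleGraph V) [DecidableRel G.Adj]
    (hG : G.IsTree) (hn : 4 ≤ Fintype.card V)
    (hdeg : ∀ v : V, G.degree v ≠ 2)
    (hnotstar : ¬ ∃ c : V, ∀ v : V, v ≠ c → G.Adj c v) :
    IsGreatest {k : ℕ | ∃ T : ℕ, ∃ a : Fin k → ℕ → V, FeasibleAgency G k T a}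
      (Fintype.card V - 3) := by
  constructor
  · exact Agency.lower G hG hdeg (by omega)
  · rintro k ⟨T, a, ha⟩
    by_contra hk
    have hle : Fintype.card V - 2 ≤ k := by omega
    refine Agency.upper hG hn hnotstar (k := Fintype.card V - 2) (T := T)
      (fun i => a (Fin.castLE hle i)) (by omega) ⟨fun i => ha.1 _, fun i j hij => ha.2 _ _ ?_⟩
    exact fun h => hij (Fin.castLE_injective hle h)
end

section
/- Let G be a tree on n ≥ 4 vertices in which no vertex has degree 2 and which is not a star. Suppose n − 3 agents occupy pairwise distinct vertices of G, agent i occupies vertex u, and uv is an edge of G. Then there exist a length S and a sequence of configurations f_0, f_1, …, f_S (each f_t an injective map from the set of agents to the vertices of G) such that f_0 is the given configuration, for every agent j and every 0 ≤ t < S either f_t(j) = f_{t+1}(j) or f_t(j)f_{t+1}(j) is an edge of G, no two distinct agents j, j' satisfy f_t(j) = f_{t+1}(j') and f_{t+1}(j) = f_t(j') with f_t(j) ≠ f_{t+1}(j) for any 0 ≤ t < S, and f_S(i) = v. -/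
open SimpleGraph

namespace AgentMoves

variable {V : Type*} {ι : Type*}

/-- one feasible move between configurations -/
def St (G : SimpleGraph V) (f f' : ι → V) : Prop :=
  Function.Injective f' ∧ (∀ j, f j = f' j ∨ G.Adj (f j) (f' j)) ∧
    ∀ j j', j ≠ j' → ¬(f j = f' j' ∧ f' j = f j' ∧ f j ≠ f' j)

/-- reachability of configurations -/
abbrev Rch (G : SimpleGraph V) (f f' : ι → V) : Prop := Relation.ReflTransGen (St G) f f'

/-- an unoccupied vertex -/
def Hole (f : ι → V) (w : V) : Prop := ∀ j, f j ≠ w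

/-- one step in the graph with `u` deleted -/
def Sp (G : SimpleGraph V) (u a b : V) : Prop := G.Adj a b ∧ a ≠ u ∧ b ≠ u

/-- connectivity in the graph with `u` deleted -/
abbrev R (G : SimpleGraph V) (u a b : V) : Prop := Relation.ReflTransGen (Sp G u) a b

theorem R_symm {G : SimpleGraph V} {u a b : V} (h : R G u a b) : R G u b a := by
  induction h with
  | refl => exact .refl
  | tail _ h2 ih => exact .head ⟨h2.1.symm, h2.2.2, h2.2.1⟩ ih

theorem inj_of_rch {G : SimpleGraph V} {f f' : ι → V} (hf : Function.Injective f)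
    (h : Rch G f f') : Function.Injective f' := by
  cases h with
  | refl => exact hf
  | tail _ h2 => exact h2.1

theorem move [DecidableEq ι] {G : SimpleGraph V} {f : ι → V} (hf : Function.Injective f)
    (j : ι) (w : V) (hw : Hole f w) (ha : G.Adj (f j) w) : St G f (Function.update f j w) := by
  refine ⟨?_, ?_, ?_⟩
  · intro k l h
    by_cases hk : k = j <;> by_cases hl : l = j
    · rw [hk, hl]
    · subst hk; simp [hl] at h; exact absurd h.symm (hw l)
    · subst hl; simp [hk] at h; exact absurd h (hw k)
    · simp [hk, hl] at h; exact hf h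
  · intro k
    by_cases hk : k = j
    · subst hk; right; simpa using ha
    · left; simp [hk]
  · rintro k l hkl ⟨h1, h2, h3⟩
    by_cases hk : k = j
    · subst hk
      simp at h2
      exact hw l h2.symm
    · simp [hk] at h3

theorem rmove [DecidableEq ι] {G : SimpleGraph V} {g f : ι → V} (hg : Function.Injective g)
    (h : Rch G g f) (j : ι) (w : V) (hw : Hole f w) (ha : G.Adj (f j) w) :
    Rch G g (Function.update f j w) :=
  h.tail (move (inj_of_rch hg h) j w hw ha)

/-- swapping a hole with an adjacent occupied vertex -/
theorem swap [DecidableEq ι] {G : SimpleGraph V} {f : ι → V} (hf : Function.Injective f)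
    (i : ι) {x z : V} (hx : Hole f x) (hz : ¬ Hole f z) (ha : G.Adj x z) (hzi : z ≠ f i) :
    ∃ f', Rch G f f' ∧ f' i = f i ∧ ∀ w, Hole f' w ↔ (Hole f w ∧ w ≠ x) ∨ w = z := by
  obtain ⟨j, hj⟩ : ∃ j, f j = z := by simpa [Hole] using hz
  subst hj
  have hij : i ≠ j := by rintro rfl; exact hzi rfl
  refine ⟨Function.update f j x, rmove hf .refl j x hx ha.symm, by simp [hij], ?_⟩
  intro w
  constructor
  · intro h
    by_cases hw : w = f j
    · exact .inr hw
    · left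
      refine ⟨fun k hk => ?_, fun hk => h j (by simp [hk])⟩
      by_cases hkj : k = j
      · subst hkj; exact hw hk.symm
      · exact h k (by simp [hkj, hk])
  · rintro (⟨h1, h2⟩ | rfl) k hk
    · by_cases hkj : k = j
      · subst hkj; simp at hk; exact h2 hk.symm
      · simp [hkj] at hk; exact h1 k hk
    · by_cases hkj : k = j
      · subst hkj; simp at hk; exact hx k hk.symm
      · simp [hkj] at hk; exact hkj (hf hk)

/-- transporting a hole inside a component of the graph with `u` deleted -/
theorem transport [DecidableEq ι] {G : SimpleGraph V} {u : V} (i : ι) {x y : V}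
    (h : R G u x y) : ∀ f : ι → V, Function.Injective f → f i = u → Hole f x → ¬ Hole f y →
    ∃ f', Rch G f f' ∧ f' i = u ∧ ∀ w, Hole f' w ↔ (Hole f w ∧ w ≠ x) ∨ w = y := by
  induction h using Relation.ReflTransGen.head_induction_on with
  | refl => intro f _ _ h1 h2; exact absurd h1 h2
  | head h1 _ ih =>
    rename_i x z _
    intro f hf hi hx hy
    by_cases hz : Hole f z
    · obtain ⟨f1, r1, i1, H1⟩ := ih f hf hi hz hy
      have hxz : x ≠ z := h1.1.ne
      have hyz : y ≠ z := by rintro rfl; exact hy hz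
      have hyx : y ≠ x := by rintro rfl; exact hy hx
      obtain ⟨f2, r2, i2, H2⟩ := swap (G := G) (inj_of_rch hf r1) i (x := x) (z := z)
        ((H1 x).2 (.inl ⟨hx, hxz⟩)) (by rw [H1]; simp [hyz.symm]) h1.1 (by rw [i1]; exact h1.2.2)
      refine ⟨f2, r1.trans r2, i2.trans i1, fun w => ?_⟩
      rw [H2, H1]
      by_cases hwz : w = z
      · subst hwz; simp [hz, hxz.symm]
      · by_cases hwy : w = y
        · subst hwy; simp [hyx]
        · simp [hwz, hwy]
    · obtain ⟨f1, r1, i1, H1⟩ := swap (G := G) hf i hx hz h1.1 (by rw [hi]; exact h1.2.2)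
      by_cases hyz : y = z
      · subst hyz; exact ⟨f1, r1, i1.trans hi, H1⟩
      obtain ⟨f2, r2, i2, H2⟩ := ih f1 (inj_of_rch hf r1) (i1.trans hi) ((H1 z).2 (.inr rfl))
        (by rw [H1]; simp [hy, hyz])
      refine ⟨f2, r1.trans r2, i2, fun w => ?_⟩
      rw [H2, H1]
      by_cases hwz : w = z
      · subst hwz; simp [hz]
      · simp [hwz]

open Classical in
/-- the finite set of holes -/
noncomputable def HS [Fintype V] (f : ι → V) : Finset V := Finset.univ.filter (Hole f)

theorem mem_HS [Fintype V] {f : ι → V} {w : V} : w ∈ HS f ↔ Hole f w := by simp [HS]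

theorem card_HS [Fintype V] [Fintype ι] {f : ι → V} (hf : Function.Injective f) :
    (HS f).card + Fintype.card ι = Fintype.card V := by
  classical
  have h : HS f = (Finset.univ.image f)ᶜ := by
    ext w; simp [mem_HS, Hole]
  have e : (Finset.univ.image f).card = Fintype.card ι := Finset.card_image_of_injective _ hf
  rw [h, ← e, Finset.card_compl_add_card]

open Classical in
theorem gather [Fintype V] [Fintype ι] {G : SimpleGraph V} {u : V} (i : ι) (T : Finset V) :
    ∀ (n : ℕ) (f : ι → V), Function.Injective f → f i = u → (T \ HS f).card = n →
    T.card ≤ (HS f).card → (∀ h ∈ HS f, ∀ t ∈ T, R G u h t) →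
    ∃ f', Rch G f f' ∧ f' i = u ∧ ∀ t ∈ T, Hole f' t := by
  intro n
  induction n with
  | zero =>
    intro f hf hi hc _ _
    refine ⟨f, .refl, hi, fun t ht => ?_⟩
    rw [Finset.card_eq_zero, Finset.sdiff_eq_empty_iff_subset] at hc
    exact mem_HS.1 (hc ht)
  | succ n ih =>
    intro f hf hi hc hT hR
    obtain ⟨t, ht⟩ : (T \ HS f).Nonempty := by
      rw [← Finset.card_pos]; omega
    rw [Finset.mem_sdiff] at ht
    obtain ⟨h, hh, hhT⟩ : ∃ h ∈ HS f, h ∉ T := by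
      by_contra! hcon
      have := Finset.card_lt_card (s := HS f) (t := T) ⟨hcon, fun h => ht.2 (h ht.1)⟩
      omega
    obtain ⟨f1, r1, i1, H1⟩ := transport i (hR h hh t ht.1) f hf hi (mem_HS.1 hh)
      (fun q => ht.2 (mem_HS.2 q))
    have hf1 := inj_of_rch hf r1
    have e : T \ HS f1 = (T \ HS f).erase t := by
      ext w
      simp only [Finset.mem_sdiff, Finset.mem_erase, mem_HS, H1]
      constructor
      · rintro ⟨a, b⟩
        push Not at b
        exact ⟨b.2, a, fun q => hhT (b.1 q ▸ a)⟩
      · rintro ⟨a, b, c⟩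
        exact ⟨b, by simp [a, c]⟩
    obtain ⟨f2, r2, i2, H2⟩ := ih f1 hf1 i1
      (by rw [e, Finset.card_erase_of_mem (Finset.mem_sdiff.2 ht)]; omega)
      (by have := card_HS hf; have := card_HS hf1; omega)
      (by
        intro w hw s hs
        rw [mem_HS, H1] at hw
        rcases hw with hw | rfl
        · exact hR w (mem_HS.2 hw.1) s hs
        · exact (R_symm (hR h hh w ht.1)).trans (hR h hh s hs))
    exact ⟨f2, r1.trans r2, i2, H2⟩

theorem dance3 [DecidableEq ι] {G : SimpleGraph V} {f : ι → V} (hf : Function.Injective f)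
    (i : ι) {a b v : V} (ha : Hole f a) (hb : Hole f b) (hab : a ≠ b) (hv : ¬ Hole f v)
    (hua : G.Adj (f i) a) (hub : G.Adj (f i) b) (huv : G.Adj (f i) v) :
    ∃ f', Rch G f f' ∧ f' i = v := by
  obtain ⟨j, rfl⟩ : ∃ j, f j = v := by simpa [Hole] using hv
  have hij : i ≠ j := by rintro rfl; exact huv.ne rfl
  have hji := hij.symm
  have hne : ∀ k l, f k = f l ↔ k = l := fun k l => hf.eq_iff
  have r1 := rmove hf .refl i a ha hua
  have r2 := rmove hf r1 j (f i) (by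
    intro k; have := ha i
    by_cases k = i <;> by_cases k = j <;> simp_all [Hole, Function.update_apply, eq_comm])
    (by simpa [hji] using huv.symm)
  have r3 := rmove hf r2 j b (by
    intro k; have := hub.ne
    by_cases k = i <;> by_cases k = j <;> simp_all [Hole, Function.update_apply])
    (by simpa [hji] using hub)
  have r4 := rmove hf r3 i (f i) (by
    intro k; have := hub.ne; have := hua.ne
    by_cases k = i <;> by_cases k = j <;> simp_all [Hole, Function.update_apply, eq_comm])
    (by simpa [hij] using hua.symm)
  have r5 := rmove hf r4 i (f j) (by
    intro k; have := hb j
    by_cases k = i <;> by_cases k = j <;> simp_all [Hole, Function.update_apply, eq_comm])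
    (by simpa [hij] using huv)
  exact ⟨_, r5, by simp⟩

theorem dance4 [DecidableEq ι] {G : SimpleGraph V} {f : ι → V} (hf : Function.Injective f)
    (i : ι) {a c d v : V} (ha : Hole f a) (hc : Hole f c) (hd : Hole f d)
    (hcd : c ≠ d) (hv : ¬ Hole f v)
    (hua : G.Adj (f i) a) (hac : G.Adj a c) (had : G.Adj a d) (huv : G.Adj (f i) v) :
    ∃ f', Rch G f f' ∧ f' i = v := by
  have hv' : ∃ j, f j = v := by simpa [Hole] using hv
  obtain ⟨j, rfl⟩ := hv'
  have hij : i ≠ j := by rintro rfl; exact huv.ne rfl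
  have r1 := rmove hf .refl i a ha hua
  have r2 := rmove hf r1 i c (by
    intro k; have := hac.ne
    by_cases k = i <;> simp_all [Hole, Function.update_apply]) (by simpa using hac)
  rw [Function.update_idem] at r2
  have i2 := inj_of_rch hf r2
  -- move `j` to `f i`, then to `a`, then to `d`
  have r3 := rmove hf r2 j (f i) (by
    intro k; have := hc i; have := hf.eq_iff (a := k) (b := i)
    by_cases k = i <;> simp_all [Hole, Function.update_apply, eq_comm])
    (by simpa [hij.symm] using huv.symm)
  have r4 := rmove hf r3 j a (by
    intro k; have := hua.ne; have := hac.ne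
    by_cases k = i <;> by_cases k = j <;> simp_all [Hole, Function.update_apply, eq_comm])
    (by simpa using hua)
  rw [Function.update_idem] at r4
  have r5 := rmove hf r4 j d (by
    intro k; have := had.ne
    by_cases k = i <;> by_cases k = j <;> simp_all [Hole, Function.update_apply])
    (by simpa using had)
  rw [Function.update_idem] at r5
  have r6 := rmove hf r5 i a (by
    intro k; have := had.ne; have := hac.ne
    by_cases k = i <;> by_cases k = j <;> simp_all [Hole, Function.update_apply, eq_comm])
    (by simpa [hij] using hac.symm)
  have r7 := rmove hf r6 i (f i) (by
    intro k; have := hd i; have := hua.ne; have := hf.eq_iff (a := k) (b := i)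
    by_cases k = i <;> by_cases k = j <;> simp_all [Hole, Function.update_apply, eq_comm])
    (by simpa using hua.symm)
  have r8 := rmove hf r7 i (f j) (by
    intro k; have := hd j; have := huv.ne; have := hf.eq_iff (a := k) (b := j)
    by_cases k = i <;> by_cases k = j <;> simp_all [Hole, Function.update_apply, eq_comm])
    (by simpa using huv)
  exact ⟨_, r8, by simp⟩

theorem exists_nbr {G : SimpleGraph V} (hG : G.Connected) (u x : V) :
    x = u ∨ ∃ a, G.Adj u a ∧ R G u a x := by
  have h := (SimpleGraph.reachable_iff_reflTransGen u x).1 (hG.preconnected u x)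
  induction h with
  | refl => exact .inl rfl
  | tail _ h2 ih =>
    rename_i b c _
    by_cases hc : c = u
    · exact .inl hc
    right
    rcases ih with rfl | ⟨a, h3, h4⟩
    · exact ⟨c, h2, .refl⟩
    · by_cases hb : b = u
      · subst hb; exact ⟨c, h2, .refl⟩
      · exact ⟨a, h3, h4.tail ⟨h2, hb, hc⟩⟩

open Classical in
theorem main [Fintype V] [Fintype ι] {G : SimpleGraph V} [DecidableRel G.Adj]
    (hG : G.Connected) (hdeg : ∀ w : V, G.degree w ≠ 2) {f : ι → V}
    (hf : Function.Injective f) (hcard : Fintype.card ι + 3 = Fintype.card V)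
    (i : ι) {u v : V} (hi : f i = u) (huv : G.Adj u v) :
    ∃ f', Rch G f f' ∧ f' i = v := by
  have hH : (HS f).card = 3 := by have := card_HS hf; omega
  have fin : ∀ f1, Rch G f f1 → f1 i = u → Hole f1 v → ∃ f', Rch G f f' ∧ f' i = v :=
    fun f1 r h1 h2 => ⟨_, rmove hf r i v h2 (h1 ▸ huv), by simp⟩
  by_cases hv : Hole f v
  · exact fin f .refl hi hv
  by_cases hx : ∃ x, Hole f x ∧ R G u x v
  · obtain ⟨x, hx, hxv⟩ := hx
    obtain ⟨f1, r1, i1, H1⟩ := transport i hxv f hf hi hx hv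
    exact fin f1 r1 i1 ((H1 v).2 (.inr rfl))
  push Not at hx
  have hnbr : ∀ x, Hole f x → ∃ a, G.Adj u a ∧ R G u x a := by
    intro x h
    rcases exists_nbr hG u x with rfl | ⟨a, h1, h2⟩
    · exact absurd hi (h i)
    · exact ⟨a, h1, R_symm h2⟩
  have key : ∀ (f : ι → V), Function.Injective f → f i = u → ∀ x a, Hole f x → R G u x a →
      ∃ f', Rch G f f' ∧ f' i = u ∧ Hole f' a ∧
        (∀ w, Hole f w → w ≠ x → Hole f' w) ∧ (∀ w, Hole f' w → Hole f w ∨ w = a) := by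
    intro f hf hi x a hx hxa
    by_cases ha : Hole f a
    · exact ⟨f, .refl, hi, ha, fun w h _ => h, fun w h => .inl h⟩
    · obtain ⟨f1, r1, i1, H1⟩ := transport i hxa f hf hi hx ha
      exact ⟨f1, r1, i1, (H1 a).2 (.inr rfl), fun w h h' => (H1 w).2 (.inl ⟨h, h'⟩),
        fun w h => ((H1 w).1 h).imp And.left id⟩
  by_cases hxy : ∃ x y, Hole f x ∧ Hole f y ∧ ¬ R G u x y
  · obtain ⟨x, y, hx1, hy1, hn⟩ := hxy
    obtain ⟨a, ha, hxa⟩ := hnbr x hx1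
    obtain ⟨b, hb, hyb⟩ := hnbr y hy1
    have hva : v ≠ a := by rintro rfl; exact hx x hx1 hxa
    have hvb : v ≠ b := by rintro rfl; exact hx y hy1 hyb
    obtain ⟨f1, r1, i1, h1, k1, l1⟩ := key f hf hi x a hx1 hxa
    have hf1 := inj_of_rch hf r1
    obtain ⟨f2, r2, i2, h2, k2, l2⟩ := key f1 hf1 i1 y b
      (k1 y hy1 (by rintro rfl; exact hn .refl)) hyb
    have hf2 := inj_of_rch hf1 r2
    obtain ⟨f3, r3, h3⟩ := dance3 (G := G) hf2 i (a := a) (b := b) (v := v)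
      (k2 a h1 (by rintro rfl; exact hn hxa)) h2
      (by rintro rfl; exact hn (hxa.trans (R_symm hyb)))
      (fun h => by
        rcases l2 v h with h | h
        · rcases l1 v h with h | h
          · exact hv h
          · exact hva h
        · exact hvb h)
      (i2 ▸ ha) (i2 ▸ hb) (i2 ▸ huv)
    exact ⟨f3, (r1.trans r2).trans r3, h3⟩
  push Not at hxy
  obtain ⟨x, hx1⟩ : (HS f).Nonempty := by rw [← Finset.card_pos]; omega
  have hx2 := mem_HS.1 hx1
  obtain ⟨a, ha, hxa⟩ := hnbr x hx2
  have hau : a ≠ u := ha.ne'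
  have hRa : ∀ h, Hole f h → R G u h a := fun h hh => (hxy h x hh hx2).trans hxa
  have hmem : u ∈ G.neighborFinset a := by simpa using ha.symm
  have hd1 : G.degree a ≠ 1 := by
    intro h1
    obtain ⟨y, hy, hya⟩ := Finset.exists_mem_ne (s := HS f) (by omega) a
    have hR := R_symm (hRa y (mem_HS.1 hy))
    rcases Relation.ReflTransGen.cases_head hR with h | ⟨z, hz, _⟩
    · exact hya h.symm
    · have h1' : (G.neighborFinset a).card = 1 := h1
      rw [Finset.card_eq_one] at h1'
      obtain ⟨q, hq⟩ := h1'
      have e1 : z ∈ G.neighborFinset a := by simpa using hz.1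
      rw [hq, Finset.mem_singleton] at e1 hmem
      exact hz.2.2 (e1.trans hmem.symm)
  have hd0 : 0 < (G.neighborFinset a).card := Finset.card_pos.2 ⟨u, hmem⟩
  have hd : 3 ≤ (G.neighborFinset a).card := by
    have := hdeg a
    have e : (G.neighborFinset a).card = G.degree a := rfl
    omega
  have he : 1 < ((G.neighborFinset a).erase u).card := by
    rw [Finset.card_erase_of_mem hmem]; omega
  obtain ⟨c, hc, d, hd, hcd⟩ := Finset.one_lt_card.1 he
  simp only [Finset.mem_erase, mem_neighborFinset] at hc hd
  have hac : R G u a c := .single ⟨hc.2, hau, hc.1⟩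
  have had : R G u a d := .single ⟨hd.2, hau, hd.1⟩
  have hT : ({a, c, d} : Finset V).card = 3 := by
    rw [Finset.card_eq_three]
    exact ⟨a, c, d, hc.2.ne, hd.2.ne, hcd, rfl⟩
  obtain ⟨f1, r1, i1, H1⟩ := gather (G := G) i {a, c, d} _ f hf hi rfl (by omega) (by
    intro h hh t ht
    have := hRa h (mem_HS.1 hh)
    simp only [Finset.mem_insert, Finset.mem_singleton] at ht
    rcases ht with rfl | rfl | rfl
    · exact this
    · exact this.trans hac
    · exact this.trans had)
  by_cases hv1 : Hole f1 v
  · exact fin f1 r1 i1 hv1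
  obtain ⟨f2, r2, h2⟩ := dance4 (G := G) (inj_of_rch hf r1) i (H1 a (by simp)) (H1 c (by simp))
    (H1 d (by simp)) hcd hv1 (i1 ▸ ha) hc.2 hd.2 (i1 ▸ huv)
  exact ⟨f2, r1.trans r2, h2⟩

theorem seq_of_rch {G : SimpleGraph V} {g f' : ι → V} (hg : Function.Injective g)
    (h : Rch G g f') : ∃ (S : ℕ) (f : ℕ → ι → V), f 0 = g ∧ (∀ t ≤ S, Function.Injective (f t)) ∧
      (∀ t < S, St G (f t) (f (t + 1))) ∧ f S = f' := by
  induction h with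
  | refl => exact ⟨0, fun _ => g, rfl, fun _ _ => hg, fun _ h => absurd h (by omega), rfl⟩
  | tail _ h2 ih =>
    rename_i b c _
    obtain ⟨S, f, h0, h1, h3, h4⟩ := ih
    refine ⟨S + 1, fun t => if t ≤ S then f t else c, by simp [h0], ?_, ?_, by simp⟩
    · intro t _
      by_cases h : t ≤ S
      · simpa [h] using h1 t h
      · simpa [h] using h2.1
    · intro t ht
      by_cases h : t < S
      · have e1 : t ≤ S := by omega
        have e2 : t + 1 ≤ S := by omega
        simpa [e1, e2] using h3 t h
      · obtain rfl : t = S := by omega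
        simpa [h4] using h2

end AgentMoves

/-- in a tree on `n ≥ 4` vertices with no degree-2 vertex that is
not a star, if `n - 3` agents occupy pairwise distinct vertices, agent `i` sits
at `u`, and `uv` is an edge, then there is a finite sequence of feasible moves
(each agent stays or moves to an adjacent vertex, configurations stay injective,
no two agents swap along an edge) after which agent `i` occupies `v`. -/
theorem stmt14 {V : Type*} [Fintype V] (G : SimpleGraph V) [DecidableRel G.Adj]
    (hG : G.IsTree) (hn : 4 ≤ Fintype.card V)
    (hdeg : ∀ w : V, G.degree w ≠ 2)
    (hnotstar : ¬ ∃ c : V, ∀ w : V, w ≠ c → G.Adj c w)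
    (g : Fin (Fintype.card V - 3) → V) (hg : Function.Injective g)
    (i : Fin (Fintype.card V - 3)) (u v : V) (hgu : g i = u) (huv : G.Adj u v) :
    ∃ (S : ℕ) (f : ℕ → Fin (Fintype.card V - 3) → V),
      f 0 = g ∧
      (∀ t ≤ S, Function.Injective (f t)) ∧
      (∀ t < S, ∀ j, f t j = f (t + 1) j ∨ G.Adj (f t j) (f (t + 1) j)) ∧
      (∀ t < S, ∀ j j', j ≠ j' →
        ¬(f t j = f (t + 1) j' ∧ f (t + 1) j = f t j' ∧ f t j ≠ f (t + 1) j)) ∧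
      f S i = v := by
  obtain ⟨f', r, h⟩ := AgentMoves.main hG.connected hdeg hg (by simp; omega) i hgu huv
  obtain ⟨S, f, h0, h1, h2, h3⟩ := AgentMoves.seq_of_rch hg r
  exact ⟨S, f, h0, h1, fun t ht => (h2 t ht).2.1, fun t ht => (h2 t ht).2.2, h3 ▸ h⟩
end

section
/- Let G be a tree on n ≥ 2 vertices. Then the maximum integer k such that G admits a feasible agency with k agents and some time horizon T equals the minimum of those of the following three quantities whose defining stretch exists: n − stretch_YY(G) − 1, n − stretch_LY(G), and n − stretch_LL(G) + 1. -/
open SimpleGraph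

/-- A Y–Y-path: a path both of whose endpoints are joints (degree ≥ 3) and all of
whose interior vertices have degree 2. -/
def IsYYPath {V : Type*} [Fintype V] (G : SimpleGraph V) [DecidableRel G.Adj]
    {x y : V} (p : G.Walk x y) : Prop :=
  p.IsPath ∧ 3 ≤ G.degree x ∧ 3 ≤ G.degree y ∧
    ∀ w ∈ p.support, w ≠ x → w ≠ y → G.degree w = 2

/-- An L–Y-path: a path whose endpoints are a leaf (degree 1) and a joint
(degree ≥ 3) and all of whose interior vertices have degree 2. -/
def IsLYPath {V : Type*} [Fintype V] (G : SimpleGraph V) [DecidableRel G.Adj]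
    {x y : V} (p : G.Walk x y) : Prop :=
  p.IsPath ∧ G.degree x = 1 ∧ 3 ≤ G.degree y ∧
    ∀ w ∈ p.support, w ≠ x → w ≠ y → G.degree w = 2


section AgTree

variable {V : Type*} {G : SimpleGraph V}

lemma ag_step (hG : G.IsTree) (r : V) {a b : V} (h : G.Adj a b) :
    G.dist r a = G.dist r b + 1 ∨ G.dist r b = G.dist r a + 1 :=
  hG.dist_eq_dist_add_one_of_adj r h

lemma ag_path_unique (hG : G.IsTree) {a b : V} {p q : G.Walk a b} (hp : p.IsPath)
    (hq : q.IsPath) : p = q :=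
  (hG.existsUnique_path a b).unique hp hq

lemma ag_path_len (hG : G.IsTree) {a b : V} {p : G.Walk a b} (hp : p.IsPath) :
    p.length = G.dist a b := by
  obtain ⟨q, hq, hl⟩ := hG.connected.exists_path_of_dist a b
  rw [ag_path_unique hG hp hq, hl]

lemma ag_dist_getVert (hG : G.IsTree) {a b : V} {p : G.Walk a b} (hp : p.IsPath) {i : ℕ}
    (hi : i ≤ p.length) : G.dist a (p.getVert i) = i := by
  rw [← ag_path_len hG (hp.take i), Walk.take_length]; omega

/-- existence of parents -/
lemma ag_parent (hG : G.IsTree) (r : V) {v : V} (h : v ≠ r) :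
    ∃ p, G.Adj p v ∧ G.dist r v = G.dist r p + 1 := by
  obtain ⟨q, hq, hl⟩ := hG.connected.exists_path_of_dist v r
  cases q with
  | nil => exact absurd rfl h
  | @cons _ p _ hadj q' =>
    refine ⟨p, hadj.symm, ?_⟩
    have h1 := ag_path_len hG hq.of_cons
    simp only [Walk.length_cons] at hl
    rw [dist_comm (u := r), dist_comm (u := r)]; omega

/-- uniqueness of parents -/
lemma ag_parent_unique (hG : G.IsTree) (r : V) {v p q : V} (hp : G.Adj p v) (hq : G.Adj q v)
    (h1 : G.dist r v = G.dist r p + 1) (h2 : G.dist r v = G.dist r q + 1) : p = q := by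
  obtain ⟨P, hP, hPl⟩ := hG.connected.exists_path_of_dist p r
  obtain ⟨Q, hQ, hQl⟩ := hG.connected.exists_path_of_dist q r
  have e1 : (Walk.cons hp.symm P).length = G.dist v r := by
    rw [Walk.length_cons, hPl, dist_comm, ← h1, dist_comm]
  have e2 : (Walk.cons hq.symm Q).length = G.dist v r := by
    rw [Walk.length_cons, hQl, dist_comm, ← h2, dist_comm]
  have := ag_path_unique hG (Walk.isPath_of_length_eq_dist _ e1)
    (Walk.isPath_of_length_eq_dist _ e2)
  have := congrArg (fun w => w.getVert 1) this
  simpa using this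

/-- the side of `a` after removing the edge `w a` -/
def agSide (G : SimpleGraph V) (w a : V) : Set V := {v | G.dist a v < G.dist w v}

lemma ag_side_dist (hG : G.IsTree) {w a v : V} (h : G.Adj w a) (hv : v ∈ agSide G w a) :
    G.dist w v = G.dist a v + 1 := by
  have := ag_step hG v h
  rw [dist_comm (u := v), dist_comm (u := v)] at this
  have hv' : G.dist a v < G.dist w v := hv
  omega

lemma ag_cross (hG : G.IsTree) {w a v v' : V} (h : G.Adj w a) (hv : v ∈ agSide G w a)
    (hv' : v' ∉ agSide G w a) (hadj : G.Adj v v') : v = a ∧ v' = w := by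
  have h1 := ag_side_dist hG h hv
  have h2 : G.dist a v' = G.dist w v' + 1 := by
    have := ag_step hG v' h
    rw [dist_comm (u := v'), dist_comm (u := v')] at this
    have : ¬ G.dist a v' < G.dist w v' := hv'
    omega
  have h3 := ag_step hG a hadj
  have h4 := ag_step hG w hadj
  by_cases hd : G.dist a v = 0
  · have ha : a = v := hG.connected.dist_eq_zero_iff.1 hd
    have : w = v' := hG.connected.dist_eq_zero_iff.1 (by omega)
    exact ⟨ha.symm, this.symm⟩
  · exfalso
    have hne : w ≠ v' := by
      rintro rfl
      have : G.dist w w = 0 := dist_self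
      omega
    obtain ⟨w1, hw1, hw1d⟩ := ag_parent hG v' hne
    have h5 := ag_step hG w1 hadj
    have h6 := ag_step hG v hw1
    have e : w1 = a := by
      apply ag_parent_unique hG v hw1 h.symm
      · rw [dist_comm (u := v'), dist_comm (u := v')] at hw1d
        rw [dist_comm (u := v), dist_comm (u := v)] at h6 ⊢
        omega
      · rw [dist_comm (u := v), dist_comm (u := v)]; omega
    subst e
    rw [dist_comm (u := v'), dist_comm (u := v')] at hw1d
    omega

lemma ag_mem_side_self {w a : V} (h : G.Adj w a) : a ∈ agSide G w a := by
  have : G.dist w a = 1 := dist_eq_one_iff_adj.2 h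
  simp [agSide, this]

lemma ag_not_mem_side {w a : V} : w ∉ agSide G w a := by
  simp [agSide]

lemma ag_exists_side (hG : G.IsTree) {w v : V} (h : v ≠ w) :
    ∃ a, G.Adj w a ∧ v ∈ agSide G w a := by
  obtain ⟨a, ha, hd⟩ := ag_parent hG v h.symm
  refine ⟨a, ha.symm, ?_⟩
  rw [dist_comm (u := v), dist_comm (u := v)] at hd
  change G.dist a v < G.dist w v; omega

lemma ag_side_unique (hG : G.IsTree) {w v a b : V} (ha : G.Adj w a) (hb : G.Adj w b)
    (h1 : v ∈ agSide G w a) (h2 : v ∈ agSide G w b) : a = b := by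
  have e1 := ag_side_dist hG ha h1
  have e2 := ag_side_dist hG hb h2
  apply ag_parent_unique hG v ha.symm hb.symm
  · rw [dist_comm (u := v), dist_comm (u := v)]; omega
  · rw [dist_comm (u := v), dist_comm (u := v)]; omega

/-- a parent in the side, toward `w` -/
lemma ag_side_parent (hG : G.IsTree) {w a v : V} (h : G.Adj w a) (hv : v ∈ agSide G w a)
    (hne : v ≠ a) : ∃ p ∈ agSide G w a, G.Adj p v ∧ G.dist w v = G.dist w p + 1 := by
  have hvw : v ≠ w := by rintro rfl; exact ag_not_mem_side hv
  obtain ⟨p, hp, hd⟩ := ag_parent hG w hvw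
  refine ⟨p, ?_, hp, hd⟩
  by_contra hn
  exact hne (ag_cross hG h hv hn hp.symm).1

lemma ag_side_walk (hG : G.IsTree) {w a : V} (h : G.Adj w a) :
    ∀ (n : ℕ) (v : V), G.dist w v = n → v ∈ agSide G w a →
      ∃ p : G.Walk a v, ∀ z ∈ p.support, z ∈ agSide G w a := by
  intro n
  induction n with
  | zero =>
    intro v h0 hv
    have : G.dist a v < G.dist w v := hv
    omega
  | succ n ih =>
    intro v h0 hv
    by_cases hva : v = a
    · subst hva
      exact ⟨Walk.nil, by simpa using hv⟩
    · obtain ⟨p, hp, hadj, hd⟩ := ag_side_parent hG h hv hva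
      obtain ⟨P, hP⟩ := ih p (by omega) hp
      refine ⟨P.concat hadj, ?_⟩
      intro z hz
      rw [Walk.support_concat] at hz
      simp at hz
      rcases hz with hz | rfl
      · exact hP z hz
      · exact hv

lemma ag_side_walk' (hG : G.IsTree) {w a : V} (h : G.Adj w a) {v v' : V}
    (hv : v ∈ agSide G w a) (hv' : v' ∈ agSide G w a) :
    ∃ p : G.Walk v v', ∀ z ∈ p.support, z ∈ agSide G w a := by
  obtain ⟨p, hp⟩ := ag_side_walk hG h _ v rfl hv
  obtain ⟨q, hq⟩ := ag_side_walk hG h _ v' rfl hv'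
  refine ⟨p.reverse.append q, ?_⟩
  intro z hz
  rw [Walk.mem_support_append_iff] at hz
  rcases hz with hz | hz
  · exact hp z (by simpa using hz)
  · exact hq z hz

/-- leaving a side goes through `w` -/
lemma ag_exit (hG : G.IsTree) {w a : V} (h : G.Adj w a) {v z : V} (p : G.Walk v z)
    (hv : v ∈ agSide G w a) (hz : z ∉ agSide G w a) : w ∈ p.support := by
  induction p with
  | nil => exact absurd hv hz
  | @cons x y _ hadj q ih =>
    by_cases hy : y ∈ agSide G w a
    · simp [ih hy hz]
    · rw [← (ag_cross hG h hv hy hadj).2]; simp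

lemma ag_dist_exit (hG : G.IsTree) {w a : V} (h : G.Adj w a) {v z : V}
    (hv : v ∈ agSide G w a) (hz : z ∉ agSide G w a) :
    G.dist v z = G.dist v w + G.dist w z := by
  classical
  obtain ⟨p, hp, hl⟩ := hG.connected.exists_path_of_dist v z
  have hw := ag_exit hG h p hv hz
  have e := congrArg Walk.length (p.take_spec hw)
  rw [Walk.length_append] at e
  have h1 := dist_le (p.takeUntil w hw)
  have h2 := dist_le (p.dropUntil w hw)
  have h3 := hG.connected.dist_triangle (u := v) (v := w) (w := z)
  omega

lemma ag_mem_path_dist (hG : G.IsTree) {v z x : V} {p : G.Walk v z} (hp : p.IsPath)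
    (hx : x ∈ p.support) : G.dist v x + G.dist x z = G.dist v z := by
  classical
  have e := congrArg Walk.length (p.take_spec hx)
  rw [Walk.length_append] at e
  rw [← ag_path_len hG hp, ← e, ag_path_len hG (hp.takeUntil hx), ag_path_len hG (hp.dropUntil hx)]

variable [Fintype V] [DecidableRel G.Adj]

lemma ag_three {v a b c : V} (ha : G.Adj v a) (hb : G.Adj v b) (hc : G.Adj v c)
    (hab : a ≠ b) (hac : a ≠ c) (hbc : b ≠ c) : 3 ≤ G.degree v := by
  classical
  have : ({a, b, c} : Finset V) ⊆ G.neighborFinset v := by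
    intro x hx
    simp at hx
    rcases hx with rfl | rfl | rfl <;> simpa
  have h2 := Finset.card_le_card this
  rw [Finset.card_eq_three.2 ⟨a, b, c, hab, hac, hbc, rfl⟩] at h2
  simpa using h2

lemma ag_two {v a b : V} (ha : G.Adj v a) (hb : G.Adj v b) (hab : a ≠ b) : 2 ≤ G.degree v := by
  classical
  have : ({a, b} : Finset V) ⊆ G.neighborFinset v := by
    intro x hx
    simp at hx
    rcases hx with rfl | rfl <;> simpa
  have h2 := Finset.card_le_card this
  rw [Finset.card_pair hab] at h2
  simpa using h2

lemma ag_other {v : V} (h : 2 ≤ G.degree v) (x : V) : ∃ a, G.Adj v a ∧ a ≠ x := by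
  classical
  have h1 : 0 < ((G.neighborFinset v).erase x).card := by
    have := Finset.pred_card_le_card_erase (s := G.neighborFinset v) (a := x)
    simp at this; omega
  obtain ⟨a, ha⟩ := Finset.card_pos.1 h1
  simp at ha
  exact ⟨a, ha.2, ha.1⟩

lemma ag_other2 {v : V} (h : 3 ≤ G.degree v) (x : V) :
    ∃ a b, G.Adj v a ∧ G.Adj v b ∧ a ≠ x ∧ b ≠ x ∧ a ≠ b := by
  classical
  have h1 : 1 < ((G.neighborFinset v).erase x).card := by
    have := Finset.pred_card_le_card_erase (s := G.neighborFinset v) (a := x)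
    simp at this; omega
  obtain ⟨a, ha, b, hb, hab⟩ := Finset.one_lt_card.1 h1
  simp at ha hb
  exact ⟨a, b, ha.2, hb.2, ha.1, hb.1, hab⟩

lemma ag_interior_two (hG : G.IsTree) {v z x : V} {p : G.Walk v z} (hp : p.IsPath)
    (hx : x ∈ p.support) (h1 : x ≠ v) (h2 : x ≠ z) : 2 ≤ G.degree x := by
  have hd := ag_mem_path_dist hG hp hx
  obtain ⟨a, ha, had⟩ := ag_parent hG v h1
  obtain ⟨b, hb, hbd⟩ := ag_parent hG z h2
  apply ag_two ha.symm hb.symm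
  rintro rfl
  have := hG.connected.dist_triangle (u := v) (v := a) (w := z)
  rw [dist_comm (u := z), dist_comm (u := z)] at hbd
  omega

/-- in a side without joints near the root, distance to the root is injective -/
lemma ag_side_inj (hG : G.IsTree) {w a : V} (h : G.Adj w a) (L : ℕ)
    (hdeg : ∀ z ∈ agSide G w a, G.dist w z < L → G.degree z ≤ 2) :
    ∀ (n : ℕ) (v v' : V), n ≤ L → v ∈ agSide G w a → v' ∈ agSide G w a → G.dist w v = n →
      G.dist w v' = n → v = v' := by
  intro n
  induction n with
  | zero =>
    intro v v' _ hv hv' h0 _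
    have : G.dist a v < G.dist w v := hv
    omega
  | succ n ih =>
    intro v v' hL hv hv' h1 h2
    have hwa : G.dist w a = 1 := dist_eq_one_iff_adj.2 h
    have key : ∀ x ∈ agSide G w a, n = 0 → G.dist w x = n + 1 → x = a := by
      intro x hx hn hd
      have := ag_side_dist hG h hx
      exact (hG.connected.dist_eq_zero_iff.1 (by omega)).symm
    by_cases hn : n = 0
    · rw [key v hv hn h1, key v' hv' hn h2]
    · obtain ⟨p, hp, hadj, hd⟩ := ag_side_parent hG h hv (by rintro rfl; omega)
      obtain ⟨p', hp', hadj', hd'⟩ := ag_side_parent hG h hv' (by rintro rfl; omega)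
      have e := ih p p' (by omega) hp hp' (by omega) (by omega)
      subst e
      obtain ⟨o, ho, hod⟩ := ag_parent hG w (v := p) (by rintro rfl; exact ag_not_mem_side hp)
      by_contra hne
      have := ag_three hadj hadj' ho.symm hne (by rintro rfl; omega) (by rintro rfl; omega)
      have := hdeg p hp (by omega)
      omega

end AgTree

section AgUpper

variable {V : Type*} {G : SimpleGraph V}

lemma ag_no_enter [Fintype V] (hG : G.IsTree) {k : ℕ} (pos pos' : Fin k → V)
    (hstep : ∀ i, pos i = pos' i ∨ G.Adj (pos i) (pos' i))
    (hinj' : ∀ i j, i ≠ j → pos' i ≠ pos' j)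
    (hedge : ∀ i j, i ≠ j → ¬(pos i = pos' j ∧ pos' i = pos j ∧ pos i ≠ pos' i))
    (C : V → Prop) (v1 : V) (hv1 : ¬ C v1)
    (hC : ∀ c w, C c → ¬ C w → G.Adj c w → w = v1)
    (hfull : ∀ c, C c → ∃ i, pos i = c) (b : Fin k) (hb : pos b = v1) (hb' : C (pos' b)) :
    False := by
  have key : ∀ m : ℕ, ∃ i : Fin k, C (pos' i) ∧ pos i ≠ pos' i ∧ G.dist v1 (pos i) = m ∧
      G.dist v1 (pos' i) = m + 1 := by
    intro m
    induction m with
    | zero =>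
      have hne : pos b ≠ pos' b := by
        intro h
        rw [← h, hb] at hb'
        exact hv1 hb'
      refine ⟨b, hb', hne, by rw [hb]; exact dist_self, ?_⟩
      have := (hstep b).resolve_left hne
      rw [hb] at this
      simpa using dist_eq_one_iff_adj.2 this
    | succ m ih =>
      obtain ⟨β, hβC, hβne, hβd, hβd'⟩ := ih
      obtain ⟨α, hα⟩ := hfull _ hβC
      have hab : α ≠ β := by
        rintro rfl
        exact hβne hα
      have hαne : pos α ≠ pos' α := by
        intro h
        exact hinj' α β hab (by rw [← h, hα])
      have hadj := (hstep α).resolve_left hαne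
      have hβadj := (hstep β).resolve_left hβne
      have hq : pos' α ≠ pos β := fun h => hedge α β hab ⟨hα, h, hαne⟩
      have hd : G.dist v1 (pos' α) = m + 2 := by
        have := ag_step hG v1 hadj
        rw [hα, hβd'] at this
        rcases this with h | h
        · exfalso
          apply hq
          rw [hα] at hadj
          exact ag_parent_unique hG v1 hadj.symm hβadj (by omega) (by omega)
        · omega
      refine ⟨α, ?_, hαne, by rw [hα, hβd'], by omega⟩
      by_contra hn
      have := hC _ _ (by rw [hα]; exact hβC) hn hadj
      rw [this, dist_self] at hd
      omega
  obtain ⟨i, -, -, hd, -⟩ := key (Fintype.card V)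
  obtain ⟨q, hq, hl⟩ := hG.connected.exists_path_of_dist v1 (pos i)
  have := hq.length_lt
  omega

lemma ag_full [Fintype V] {k : ℕ} (pos : Fin k → V) (hinj : ∀ i j, i ≠ j → pos i ≠ pos j)
    (C : V → Prop) [DecidablePred C] (S : Finset (Fin k)) (hS : ∀ i ∈ S, C (pos i))
    (hc : (Finset.univ.filter C).card ≤ S.card) : ∀ c, C c → ∃ i, pos i = c := by
  classical
  intro c hcC
  have hsub : S.image pos ⊆ Finset.univ.filter C := by
    intro x hx
    obtain ⟨i, hi, rfl⟩ := Finset.mem_image.1 hx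
    simp [hS i hi]
  have hcard : (S.image pos).card = S.card := by
    apply Finset.card_image_of_injective
    intro i j hij
    by_contra hne
    exact hinj i j hne hij
  have := Finset.eq_of_subset_of_card_le hsub (by omega)
  have hm : c ∈ S.image pos := by rw [this]; simp [hcC]
  obtain ⟨i, _, hi⟩ := Finset.mem_image.1 hm
  exact ⟨i, hi⟩

lemma ag_upper [Fintype V] (hG : G.IsTree) (f : V → ℕ) (s : ℕ)
    (hf1 : ∀ u v, G.Adj u v → f u ≤ f v + 1) (hf2 : ∀ v, f v ≤ s + 1)
    (hf3 : ∀ u v, f u = f v → 1 ≤ f u → f u ≤ s → u = v)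
    (hf4 : ∀ u v, f u = 1 → f v = 1 → u = v)
    (hf5 : ∀ u v, f u = s → f v = s → u = v)
    (hC : ∃ v, f v = 0) (hD : ∃ v, f v = s + 1) {k T : ℕ} (a : Fin k → ℕ → V)
    (ha : FeasibleAgency G k T a)
    (hk : (Finset.univ.filter (fun v => f v = 0)).card +
      (Finset.univ.filter (fun v => f v = s + 1)).card ≤ k) : False := by
  classical
  obtain ⟨htour, hcrash⟩ := ha
  set nC := (Finset.univ.filter (fun v => f v = 0)).card with hnC
  set nD := (Finset.univ.filter (fun v => f v = s + 1)).card with hnD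
  have hCpos : 0 < nC := Finset.card_pos.2 (by obtain ⟨v, hv⟩ := hC; exact ⟨v, by simp [hv]⟩)
  have hDpos : 0 < nD := Finset.card_pos.2 (by obtain ⟨v, hv⟩ := hD; exact ⟨v, by simp [hv]⟩)
  have hinj : ∀ t ≤ T, ∀ i j, i ≠ j → a i t ≠ a j t := fun t ht i j hij => (hcrash i j hij).1 t ht
  let N : ℕ → Finset (Fin k) := fun j => Finset.univ.filter (fun i => f (a i 0) ≤ j)
  -- agents in D at time 0 number at most nD
  have hNs : nC ≤ (N s).card := by
    have h1 : (Finset.univ.filter (fun i : Fin k => ¬ f (a i 0) ≤ s)).card ≤ nD := by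
      apply Finset.card_le_card_of_injOn (fun i => a i 0)
      · intro i hi
        have := hf2 (a i 0)
        simp at hi ⊢
        omega
      · intro i _ j _ hij
        by_contra hne
        exact hinj 0 (Nat.zero_le _) i j hne hij
    have h2 := Finset.card_filter_add_card_filter_not (s := (Finset.univ : Finset (Fin k)))
      (fun i => f (a i 0) ≤ s)
    rw [Finset.card_univ, Fintype.card_fin] at h2
    change nC ≤ (Finset.univ.filter (fun i : Fin k => f (a i 0) ≤ s)).card
    omega
  have hN0 : (N 0).card ≤ nC := by
    apply Finset.card_le_card_of_injOn (fun i => a i 0)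
    · intro i hi
      simp [N] at hi ⊢
      omega
    · intro i _ j _ hij
      by_contra hne
      exact hinj 0 (Nat.zero_le _) i j hne hij
  have hex : ∃ j, nC ≤ (N j).card := ⟨s, hNs⟩
  obtain ⟨S, hScard, j0, hSdef⟩ : ∃ S : Finset (Fin k), S.card = nC ∧
      ∃ j, ∀ i, i ∈ S ↔ f (a i 0) ≤ j := by
    refine ⟨N (Nat.find hex), ?_, Nat.find hex, fun i => by simp [N]⟩
    apply le_antisymm _ (Nat.find_spec hex)
    rcases hj : Nat.find hex with _ | j
    · exact hN0
    · have hlt : (N j).card < nC := by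
        by_contra hge
        have := Nat.find_min' hex (not_lt.1 hge)
        omega
      have hjs : j + 1 ≤ s := by
        have := Nat.find_min' hex hNs
        omega
      have hle : (N (j + 1) \ N j).card ≤ 1 := by
        rw [Finset.card_le_one]
        intro x hx y hy
        simp [N] at hx hy
        by_contra hne
        exact hinj 0 (Nat.zero_le _) x y hne (hf3 _ _ (by omega) (by omega) (by omega))
      have := Finset.card_le_card_sdiff_add_card (s := N (j + 1)) (t := N j)
      omega
  have hSc : nD ≤ Sᶜ.card := by
    rw [Finset.card_compl, Fintype.card_fin]; omega
  have inv : ∀ t ≤ T, ∀ x ∈ S, ∀ y ∉ S, f (a x t) < f (a y t) := by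
    intro t
    induction t with
    | zero =>
      intro _ x hx y hy
      rw [hSdef] at hx hy
      omega
    | succ t ih =>
      intro ht x hx y hy
      have ih := ih (by omega)
      have hstep : ∀ i, a i t = a i (t + 1) ∨ G.Adj (a i t) (a i (t + 1)) :=
        fun i => (htour i).1 t (by omega)
      have hxy : x ≠ y := by rintro rfl; exact hy hx
      have hedge : ∀ i j, i ≠ j →
          ¬(a i t = a j (t + 1) ∧ a i (t + 1) = a j t ∧ a i t ≠ a i (t + 1)) :=
        fun i j hij => (hcrash i j hij).2 t (by omega)
      have hlip : ∀ i, f (a i t) ≤ f (a i (t + 1)) + 1 ∧ f (a i (t + 1)) ≤ f (a i t) + 1 := by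
        intro i
        rcases hstep i with h | h
        · rw [← h]; omega
        · exact ⟨hf1 _ _ h, hf1 _ _ h.symm⟩
      -- no agent outside S enters C
      have noC : ∀ b, b ∉ S → f (a b (t + 1)) ≠ 0 := by
        intro b hb hb0
        have hb1 : f (a b t) = 1 := by
          have := (hlip b).1
          have := ih x hx b hb
          omega
        refine ag_no_enter hG (fun i => a i t) (fun i => a i (t + 1)) hstep
          (hinj (t + 1) ht) hedge (fun v => f v = 0) (a b t) (by simp [hb1]) ?_ ?_ b rfl hb0
        · intro c w hc hw hadj
          have := hf1 _ _ hadj.symm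
          exact hf4 _ _ (by omega) hb1
        · apply ag_full _ (hinj t (by omega)) _ S _ (by omega)
          intro i hi
          have := ih i hi b hb
          show f (a i t) = 0
          omega
      have noD : ∀ b, b ∈ S → f (a b (t + 1)) ≠ s + 1 := by
        intro b hb hb0
        have hb1 : f (a b t) = s := by
          have := (hlip b).2
          have := ih b hb y hy
          have := hf2 (a y t)
          omega
        refine ag_no_enter hG (fun i => a i t) (fun i => a i (t + 1)) hstep
          (hinj (t + 1) ht) hedge (fun v => f v = s + 1) (a b t) (by simp [hb1]) ?_ ?_ b rfl hb0
        · intro c w hc hw hadj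
          have := hf1 _ _ hadj
          have := hf2 w
          exact hf5 _ _ (by omega) hb1
        · apply ag_full _ (hinj t (by omega)) _ Sᶜ _ (by omega)
          intro i hi
          have := ih b hb i (by simpa using hi)
          have := hf2 (a i t)
          show f (a i t) = s + 1
          omega
      by_contra hcon
      have h1 := ih x hx y hy
      have h2 := hlip x
      have h3 := hlip y
      have h4 := noC y hy
      have h5 := noD x hx
      have h6 := hf2 (a y t)
      have h7 := hf2 (a x (t + 1))
      have h8 := hf2 (a y (t + 1))
      by_cases he : f (a x (t + 1)) = f (a y (t + 1))
      · exact hinj (t + 1) ht x y hxy (hf3 _ _ he (by omega) (by omega))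
      · -- swap
        have e1 : a x t = a y (t + 1) := by
          by_cases hz : f (a x t) = 0
          · omega
          · exact hf3 _ _ (by omega) (by omega) (by omega)
        have e2 : a x (t + 1) = a y t := hf3 _ _ (by omega) (by omega) (by omega)
        exact hedge x y hxy ⟨e1, e2, fun h => by rw [← h] at h2; rw [h] at h1; omega⟩
  obtain ⟨x, hx⟩ := Finset.card_pos.1 (show 0 < S.card by omega)
  obtain ⟨y, hy⟩ := Finset.card_pos.1 (show 0 < Sᶜ.card by omega)
  obtain ⟨d, hd⟩ := hD
  obtain ⟨t, ht, htd⟩ := (htour x).2.1 d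
  have h1 := inv t ht x hx y (by simpa using hy)
  have h2 := hf2 (a y t)
  rw [htd] at h1
  omega

end AgUpper

section AgUpper2

variable {V : Type*} {G : SimpleGraph V} [Fintype V] [DecidableRel G.Adj]

lemma ag_path_side (hG : G.IsTree) {x a y : V} (h : G.Adj x a) (q : G.Walk a y)
    (hp : (Walk.cons h q).IsPath) {d : ℕ} (hd : d ≤ q.length) :
    q.getVert d ∈ agSide G x a ∧ G.dist x (q.getVert d) = d + 1 := by
  have h1 := ag_dist_getVert hG hp (i := d + 1) (by simp; omega)
  have h2 := ag_dist_getVert hG hp.of_cons hd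
  rw [Walk.getVert_cons_succ] at h1
  refine ⟨?_, h1⟩
  change G.dist a _ < G.dist x _
  omega

lemma ag_deg_le (hG : G.IsTree) {x a y : V} (h : G.Adj x a) (q : G.Walk a y)
    (hp : (Walk.cons h q).IsPath)
    (hint : ∀ w ∈ (Walk.cons h q).support, w ≠ x → w ≠ y → G.degree w = 2) :
    ∀ (n : ℕ) (z : V), z ∈ agSide G x a → G.dist x z = n → n < q.length + 1 →
      G.degree z ≤ 2 := by
  intro n
  induction n using Nat.strong_induction_on with
  | _ n ih =>
    intro z hz hd hn
    rcases n with _ | n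
    · have : G.dist a z < G.dist x z := hz
      omega
    obtain ⟨hs, hsd⟩ := ag_path_side hG h q hp (d := n) (by omega)
    have e : z = q.getVert n :=
      ag_side_inj hG h (n + 1) (fun w hw hwd => ih _ hwd w hw rfl (by omega)) (n + 1) _ _ le_rfl
        hz hs hd hsd
    have hy : G.dist x y = q.length + 1 := by
      rw [← ag_path_len hG hp, Walk.length_cons]
    apply le_of_eq
    apply hint
    · rw [e]; simp [Walk.getVert_mem_support]
    · rintro rfl; exact ag_not_mem_side hz
    · rintro rfl; omega

lemma ag_far_nbr (hG : G.IsTree) {x y : V} (hy : 3 ≤ G.degree y) :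
    ∃ z, G.Adj y z ∧ G.dist x z = G.dist x y + 1 := by
  by_cases hxy : y = x
  · subst hxy
    obtain ⟨z, hz, _⟩ := ag_other (G := G) (v := y) (by omega) y
    exact ⟨z, hz, by rw [dist_eq_one_iff_adj.2 hz]; simp⟩
  · obtain ⟨p, hp, hd⟩ := ag_parent hG x hxy
    obtain ⟨z, hz, hne⟩ := ag_other (G := G) (v := y) (by omega) p
    refine ⟨z, hz, ?_⟩
    rcases ag_step hG x hz with h | h
    · exact absurd (ag_parent_unique hG x hz.symm hp h hd) hne
    · exact h

lemma ag_card_support {x y : V} {p : G.Walk x y} (hp : p.IsPath) (A : Finset V)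
    (hA : ∀ v ∈ A, v ∉ p.support) : A.card + (p.length + 1) ≤ Fintype.card V := by
  classical
  have h1 : p.support.toFinset.card = p.length + 1 := by
    rw [List.toFinset_card_of_nodup hp.support_nodup, Walk.length_support]
  rw [← h1, ← Finset.card_union_of_disjoint]
  · exact Finset.card_le_univ _
  · rw [Finset.disjoint_left]
    intro v hv
    simpa using hA v hv

lemma ag_upper_YY (hG : G.IsTree) {x y : V} {p : G.Walk x y} (hp : IsYYPath G p)
    {k T : ℕ} (a : Fin k → ℕ → V) (ha : FeasibleAgency G k T a)
    (hk : Fintype.card V - (p.length + 1) ≤ k) : False := by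
  classical
  obtain ⟨hpath, hx, hy, hint⟩ := hp
  have hL := ag_path_len hG hpath
  obtain ⟨b, hb, hdeg, hsup⟩ : ∃ b, G.Adj x b ∧
      (∀ z ∈ agSide G x b, G.dist x z < p.length → G.degree z ≤ 2) ∧
      (∀ z ∈ p.support, z ≠ x → z ∈ agSide G x b) := by
    cases p with
    | nil =>
      obtain ⟨b, hb, _⟩ := ag_other (G := G) (v := x) (by omega) x
      exact ⟨b, hb, by simp, by simp⟩
    | @cons _ b _ h q =>
      refine ⟨b, h, fun z hz hd => ag_deg_le hG h q hpath hint _ z hz rfl (by simpa using hd), ?_⟩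
      intro z hz hzx
      rw [Walk.support_cons, List.mem_cons] at hz
      obtain ⟨d, rfl, hd⟩ := Walk.mem_support_iff_exists_getVert.1 (hz.resolve_left hzx)
      exact (ag_path_side hG h q hpath hd).1
  have hside : ∀ z ∈ agSide G x b, 1 ≤ G.dist x z := fun z hz => by
    have := ag_side_dist hG hb hz; omega
  let f : V → ℕ := fun v => if v = x then 1 else if v ∈ agSide G x b then
    min (G.dist x v + 1) (p.length + 2) else 0
  have fx : f x = 1 := by simp [f]
  have fs : ∀ v ∈ agSide G x b, f v = min (G.dist x v + 1) (p.length + 2) := by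
    intro v hv
    have : v ≠ x := by rintro rfl; exact ag_not_mem_side hv
    simp [f, this, hv]
  have fo : ∀ v, v ≠ x → v ∉ agSide G x b → f v = 0 := by
    intro v h1 h2
    simp [f, h1, h2]
  have f3 : ∀ u v, f u = f v → 1 ≤ f u → f u ≤ p.length + 1 → u = v := by
    intro u v huv h1 h2
    by_cases hu : u = x <;> by_cases hv : v = x
    · rw [hu, hv]
    · rw [hu, fx] at huv
      by_cases hvs : v ∈ agSide G x b
      · have := fs v hvs
        have := hside v hvs
        omega
      · have := fo v hv hvs
        omega
    · rw [hv, fx] at huv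
      by_cases hvs : u ∈ agSide G x b
      · have := fs u hvs
        have := hside u hvs
        omega
      · have := fo u hu hvs
        omega
    · by_cases hus : u ∈ agSide G x b
      · by_cases hvs : v ∈ agSide G x b
        · have e1 := fs u hus
          have e2 := fs v hvs
          exact ag_side_inj hG hb p.length hdeg (G.dist x u) u v (by omega) hus hvs rfl (by omega)
        · have := fo v hv hvs
          omega
      · have := fo u hu hus
        omega
  refine ag_upper hG f (p.length + 1) ?_ ?_ f3 ?_ ?_ ?_ ?_ a ha ?_
  · intro u v huv
    by_cases hu : u = x
    · rw [hu, fx]; omega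
    by_cases hus : u ∈ agSide G x b
    · have e := fs u hus
      by_cases hv : v = x
      · subst hv
        rw [fx, e, dist_eq_one_iff_adj.2 huv.symm]; omega
      · by_cases hvs : v ∈ agSide G x b
        · have e2 := fs v hvs
          have := ag_step hG x huv
          omega
        · exact absurd (ag_cross hG hb hus hvs huv).2 hv
    · rw [fo u hu hus]; omega
  · intro v
    by_cases hv : v = x
    · rw [hv, fx]; omega
    by_cases hvs : v ∈ agSide G x b
    · rw [fs v hvs]; omega
    · rw [fo v hv hvs]; omega
  · intro u v hu hv
    exact f3 u v (by omega) (by omega) (by omega)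
  · intro u v hu hv
    exact f3 u v (by omega) (by omega) (by omega)
  · obtain ⟨c, hc, hcb⟩ := ag_other (G := G) (v := x) (by omega) b
    refine ⟨c, fo c hc.ne' ?_⟩
    intro hcs
    exact hcb (ag_side_unique hG hc hb (ag_mem_side_self hc) hcs)
  · obtain ⟨z, hz, hzd⟩ := ag_far_nbr hG (x := x) hy
    by_cases hyx : y = x
    · subst hyx
      refine ⟨b, ?_⟩
      rw [fs b (ag_mem_side_self hb), dist_eq_one_iff_adj.2 hb]
      rw [dist_self] at hL
      omega
    · refine ⟨z, ?_⟩
      have hys := hsup y (by simp) hyx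
      have hzs : z ∈ agSide G x b := by
        by_contra hn
        have := (ag_cross hG hb hys hn hz).2
        rw [this] at hzd
        simp at hzd
      rw [fs z hzs]; omega
  · have := ag_card_support hpath ((Finset.univ.filter (fun v => f v = 0)) ∪
      (Finset.univ.filter (fun v => f v = p.length + 1 + 1))) (by
        intro v hv hvs
        simp at hv
        by_cases hvx : v = x
        · rw [hvx, fx] at hv; omega
        · have hs := hsup v hvs hvx
          have := fs v hs
          have := hside v hs
          have := ag_mem_path_dist hG hpath hvs
          omega)
    rw [Finset.card_union_of_disjoint] at this
    · omega
    · rw [Finset.disjoint_left]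
      intro v hv hv'
      simp at hv hv'
      omega

lemma ag_upper_LY (hG : G.IsTree) {x y : V} {p : G.Walk x y} (hp : IsLYPath G p)
    {k T : ℕ} (a : Fin k → ℕ → V) (ha : FeasibleAgency G k T a)
    (hk : Fintype.card V - (p.length + 1) + 1 ≤ k) : False := by
  classical
  obtain ⟨hpath, hx, hy, hint⟩ := hp
  have hL := ag_path_len hG hpath
  obtain ⟨b, hb, hdeg⟩ : ∃ b, G.Adj x b ∧
      (∀ z ∈ agSide G x b, G.dist x z < p.length → G.degree z ≤ 2) := by
    cases p with
    | nil => omega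
    | @cons _ b _ h q =>
      exact ⟨b, h, fun z hz hd => ag_deg_le hG h q hpath hint _ z hz rfl (by simpa using hd)⟩
  have hyx : x ≠ y := by rintro rfl; omega
  have hLpos := hG.connected.pos_dist_of_ne hyx
  have hside : ∀ z, z ≠ x → z ∈ agSide G x b := by
    intro z hz
    obtain ⟨c, hc, hcs⟩ := ag_exists_side hG hz
    by_cases hcb : c = b
    · rwa [← hcb]
    · have := ag_two hc hb hcb
      omega
  let f : V → ℕ := fun v => min (G.dist x v) (p.length + 1)
  have f0 : ∀ v, f v = 0 ↔ v = x := by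
    intro v
    constructor
    · intro h
      have : min (G.dist x v) (p.length + 1) = 0 := h
      exact (hG.connected.dist_eq_zero_iff.1 (by omega)).symm
    · rintro rfl; simp [f]
  have f3 : ∀ u v, f u = f v → 1 ≤ f u → f u ≤ p.length → u = v := by
    intro u v huv h1 h2
    have hu : u ≠ x := fun h => by have := (f0 u).2 h; omega
    have hv : v ≠ x := fun h => by have := (f0 v).2 h; omega
    simp only [f] at huv h1 h2
    exact ag_side_inj hG hb p.length hdeg (G.dist x u) u v (by omega) (hside u hu) (hside v hv)
      rfl (by omega)
  refine ag_upper hG f p.length ?_ ?_ f3 ?_ ?_ ?_ ?_ a ha ?_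
  · intro u v huv
    have := ag_step hG x huv
    simp only [f]
    omega
  · intro v; simp only [f]; omega
  · intro u v hu hv
    exact f3 u v (by omega) (by omega) (by omega)
  · intro u v hu hv
    exact f3 u v (by omega) (by omega) (by omega)
  · exact ⟨x, (f0 x).2 rfl⟩
  · obtain ⟨z, hz, hzd⟩ := ag_far_nbr hG (x := x) hy
    exact ⟨z, by simp only [f]; omega⟩
  · have h1 := ag_card_support hpath (Finset.univ.filter (fun v => f v = p.length + 1)) (by
        intro v hv hvs
        simp [f] at hv
        have := ag_mem_path_dist hG hpath hvs
        omega)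
    have h2 : (Finset.univ.filter (fun v => f v = 0)).card ≤ 1 := by
      rw [Finset.card_le_one]
      intro u hu v hv
      simp only [Finset.mem_filter, Finset.mem_univ, true_and, f0] at hu hv
      rw [hu, hv]
    omega

lemma ag_upper_LL (hG : G.IsTree) (hn : 2 ≤ Fintype.card V) {x y : V} {p : G.Walk x y}
    (hpath : p.IsPath) (hall : ∀ w, w ∈ p.support)
    {k T : ℕ} (a : Fin k → ℕ → V) (ha : FeasibleAgency G k T a) (hk : 2 ≤ k) : False := by
  classical
  have hL := ag_path_len hG hpath
  have hlen : 1 ≤ p.length := by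
    have h1 : p.support.toFinset = Finset.univ := by ext v; simp [hall v]
    have h2 := p.support.toFinset_card_le
    rw [h1, Finset.card_univ, Walk.length_support] at h2
    omega
  have inj : ∀ u v, G.dist x u = G.dist x v → u = v := by
    intro u v huv
    obtain ⟨i, rfl, hi⟩ := Walk.mem_support_iff_exists_getVert.1 (hall u)
    obtain ⟨j, rfl, hj⟩ := Walk.mem_support_iff_exists_getVert.1 (hall v)
    rw [ag_dist_getVert hG hpath hi, ag_dist_getVert hG hpath hj] at huv
    rw [huv]
  have hone : ∀ m, (Finset.univ.filter (fun v => G.dist x v = m)).card ≤ 1 := by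
    intro m
    rw [Finset.card_le_one]
    intro u hu v hv
    simp at hu hv
    exact inj u v (by omega)
  refine ag_upper hG (fun v => G.dist x v) (p.length - 1) ?_ ?_ ?_ ?_ ?_ ?_ ?_ a ha ?_
  · intro u v huv
    have := ag_step hG x huv
    show G.dist x u ≤ G.dist x v + 1
    omega
  · intro v
    have := ag_mem_path_dist hG hpath (hall v)
    show G.dist x v ≤ _
    omega
  · exact fun u v h _ _ => inj u v h
  · exact fun u v h h' => inj u v (h.trans h'.symm)
  · exact fun u v h h' => inj u v (h.trans h'.symm)
  · exact ⟨x, dist_self⟩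
  · exact ⟨y, by show G.dist x y = _; omega⟩
  · have h1 := hone 0
    have h2 := hone (p.length - 1 + 1)
    omega

end AgUpper2

section AgMoves

variable {V : Type*} {G : SimpleGraph V} {k : ℕ}

/-- one agent moves to a vacant adjacent vertex -/
def AgMove (G : SimpleGraph V) {k : ℕ} (c c' : Fin k → V) : Prop :=
  Function.Injective c ∧ ∃ i u, G.Adj (c i) u ∧ (∀ j, c j ≠ u) ∧ c' = Function.update c i u

/-- reachability of configurations -/
def AgReach (G : SimpleGraph V) {k : ℕ} (c c' : Fin k → V) : Prop :=
  Relation.ReflTransGen (AgMove G) c c'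

lemma ag_update_inj {c : Fin k → V} (hc : Function.Injective c) (i : Fin k) {u : V}
    (hu : ∀ j, j ≠ i → c j ≠ u) : Function.Injective (Function.update c i u) := by
  intro x y hxy
  by_cases hx : x = i <;> by_cases hy : y = i
  · rw [hx, hy]
  · subst hx
    rw [Function.update_self, Function.update_of_ne hy] at hxy
    exact absurd hxy.symm (hu y hy)
  · subst hy
    rw [Function.update_self, Function.update_of_ne hx] at hxy
    exact absurd hxy (hu x hx)
  · rw [Function.update_of_ne hx, Function.update_of_ne hy] at hxy
    exact hc hxy

lemma ag_move_inj {c c' : Fin k → V} (h : AgMove G c c') : Function.Injective c' := by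
  obtain ⟨hc, i, u, _, hu, rfl⟩ := h
  exact ag_update_inj hc i (fun j _ => hu j)

lemma ag_move_symm {c c' : Fin k → V} (h : AgMove G c c') : AgMove G c' c := by
  have hi := ag_move_inj h
  obtain ⟨hc, i, u, ha, hu, rfl⟩ := h
  refine ⟨hi, i, c i, by simpa using ha.symm, ?_, by simp⟩
  intro j
  by_cases hj : j = i
  · subst hj
    simpa using ha.ne'
  · rw [Function.update_of_ne hj]
    exact fun h => hj (hc h)

lemma ag_reach_inj {c c' : Fin k → V} (h : AgReach G c c') (hc : Function.Injective c) :
    Function.Injective c' := by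
  induction h with
  | refl => exact hc
  | tail _ h _ => exact ag_move_inj h

lemma ag_reach_symm {c c' : Fin k → V} (h : AgReach G c c') : AgReach G c' c := by
  induction h with
  | refl => exact Relation.ReflTransGen.refl
  | tail _ h ih => exact Relation.ReflTransGen.head (ag_move_symm h) ih

lemma ag_reach_trans {c c' c'' : Fin k → V} (h : AgReach G c c') (h' : AgReach G c' c'') :
    AgReach G c c'' := Relation.ReflTransGen.trans h h'

lemma ag_walk (i : Fin k) {x y : V} (p : G.Walk x y) : ∀ (c : Fin k → V),
    Function.Injective c → c i = x → (∀ j, j ≠ i → c j ∉ p.support) →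
    AgReach G c (Function.update c i y) := by
  induction p with
  | nil =>
    intro c _ h _
    rw [← h, Function.update_eq_self]
    exact Relation.ReflTransGen.refl
  | @cons x z y h p ih =>
    intro c hc hi hj
    have hz : ∀ j, j ≠ i → c j ≠ z := by
      intro j hji hjz
      apply hj j hji
      rw [hjz]; simp
    have hm : AgMove G c (Function.update c i z) := by
      refine ⟨hc, i, z, by rw [hi]; exact h, ?_, rfl⟩
      intro j
      by_cases hji : j = i
      · rw [hji, hi]; exact h.ne
      · exact hz j hji
    have := ih (Function.update c i z) (ag_move_inj hm) (by simp) (by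
      intro j hji
      rw [Function.update_of_ne hji]
      intro hmem
      exact hj j hji (by simp [hmem]))
    rw [Function.update_idem] at this
    exact Relation.ReflTransGen.head hm this

/-- one-step description of ranges -/
lemma ag_move_one {c : Fin k → V} (hc : Function.Injective c) {z z1 : V} (h : G.Adj z z1)
    (hz : z ∈ Set.range c) (hz1 : z1 ∉ Set.range c) :
    ∃ c', AgReach G c c' ∧ Set.range c' = insert z1 (Set.range c \ {z}) ∧
      ∀ j, c' j = c j ∨ (c j = z ∧ c' j = z1) := by
  obtain ⟨i, rfl⟩ := hz
  have hu : ∀ j, c j ≠ z1 := fun j hj => hz1 ⟨j, hj⟩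
  refine ⟨Function.update c i z1, Relation.ReflTransGen.single ⟨hc, i, z1, h, hu, rfl⟩, ?_, ?_⟩
  · ext v
    constructor
    · rintro ⟨j, rfl⟩
      by_cases hj : j = i
      · subst hj; simp
      · right
        rw [Function.update_of_ne hj]
        exact ⟨⟨j, rfl⟩, fun h => hj (hc h)⟩
    · rintro (rfl | ⟨⟨j, rfl⟩, hj⟩)
      · exact ⟨i, by simp⟩
      · exact ⟨j, by rw [Function.update_of_ne]; rintro rfl; exact hj rfl⟩
  · intro j
    by_cases hj : j = i
    · subst hj; right; simp
    · left; rw [Function.update_of_ne hj]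

lemma ag_shift {z z' : V} (p : G.Walk z z') : ∀ (c : Fin k → V), Function.Injective c →
    z ∈ Set.range c → z' ∉ Set.range c →
    ∃ c', AgReach G c c' ∧ Set.range c' = insert z' (Set.range c \ {z}) ∧
      ∀ j, c' j = c j ∨ (c j ∈ p.support ∧ c' j ∈ p.support) := by
  induction p with
  | nil => intro c _ h h'; exact absurd h h'
  | @cons z z1 z' h p ih =>
    intro c hc hz hz'
    have hzz' : z ≠ z' := by rintro rfl; exact hz' hz
    by_cases h1 : z1 ∈ Set.range c
    · obtain ⟨c1, hr1, hrange1, hj1⟩ := ih c hc h1 hz'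
      have hz1z' : z1 ≠ z' := by rintro rfl; exact hz' h1
      obtain ⟨c2, hr2, hrange2, hj2⟩ := ag_move_one (ag_reach_inj hr1 hc) h
        (by rw [hrange1]; exact Or.inr ⟨hz, h.ne⟩) (by
          rw [hrange1]
          rintro (h | h)
          · exact hz1z' h
          · exact h.2 rfl)
      refine ⟨c2, ag_reach_trans hr1 hr2, ?_, ?_⟩
      · rw [hrange2, hrange1]
        ext v
        have := h.ne
        simp only [Set.mem_insert_iff, Set.mem_sdiff, Set.mem_singleton_iff]
        by_cases e1 : v = z1
        · subst e1
          simp [h1, this.symm]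
        · by_cases e2 : v = z'
          · subst e2; simp [hzz'.symm]
          · simp [e1, e2]
      · intro j
        have a1 := hj1 j
        have a2 := hj2 j
        have b1 : z ∈ (Walk.cons h p).support := by simp
        have b2 : z1 ∈ (Walk.cons h p).support := by simp
        have b3 : ∀ x, x ∈ p.support → x ∈ (Walk.cons h p).support := fun x hx => by simp [hx]
        rcases a1 with a1 | ⟨a1, a1'⟩
        · rcases a2 with a2 | ⟨a2, a2'⟩
          · left; rw [a2, a1]
          · right
            rw [a1] at a2
            rw [a2, a2']; exact ⟨b1, b2⟩
        · right
          refine ⟨b3 _ a1, ?_⟩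
          rcases a2 with a2 | ⟨a2, a2'⟩
          · rw [a2]; exact b3 _ a1'
          · rw [a2']; exact b2
    · obtain ⟨c1, hr1, hrange1, hj1⟩ := ag_move_one hc h hz h1
      have b1 : z ∈ (Walk.cons h p).support := by simp
      have b2 : z1 ∈ (Walk.cons h p).support := by simp
      have b3 : ∀ x, x ∈ p.support → x ∈ (Walk.cons h p).support := fun x hx => by simp [hx]
      by_cases hz1z' : z1 = z'
      · subst hz1z'
        refine ⟨c1, hr1, hrange1, ?_⟩
        intro j
        rcases hj1 j with a1 | ⟨a1, a2⟩
        · exact Or.inl a1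
        · right; rw [a1, a2]; exact ⟨b1, b2⟩
      · obtain ⟨c2, hr2, hrange2, hj2⟩ := ih c1 (ag_reach_inj hr1 hc)
          (by rw [hrange1]; exact Or.inl rfl) (by
            rw [hrange1]
            rintro (h | h)
            · exact hz1z' h.symm
            · exact hz' h.1)
        refine ⟨c2, ag_reach_trans hr1 hr2, ?_, ?_⟩
        · rw [hrange2, hrange1]
          ext v
          simp only [Set.mem_insert_iff, Set.mem_sdiff, Set.mem_singleton_iff]
          by_cases e1 : v = z1
          · subst e1
            simp [h1, hz1z']
          · simp [e1]
        · intro j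
          rcases hj1 j with a1 | ⟨a1, a1'⟩
          · rcases hj2 j with a2 | ⟨a2, a2'⟩
            · left; rw [a2, a1]
            · right; rw [a1] at a2; exact ⟨b3 _ a2, b3 _ a2'⟩
          · right
            refine ⟨by rw [a1]; exact b1, ?_⟩
            rcases hj2 j with a2 | ⟨a2, a2'⟩
            · rw [a2, a1']; exact b2
            · exact b3 _ a2'

open Classical in
lemma ag_vacate [Fintype V] (K : Set V)
    (hK : ∀ v v', v ∈ K → v' ∈ K → ∃ p : G.Walk v v', ∀ z ∈ p.support, z ∈ K)
    (Z : Finset V) (hZ : ∀ z ∈ Z, z ∈ K) : ∀ (n : ℕ) (c : Fin k → V), Function.Injective c →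
    (Z.filter (fun z => z ∈ Set.range c)).card = n →
    Z.card ≤ (Finset.univ.filter (fun v => v ∈ K ∧ v ∉ Set.range c)).card →
    ∃ c', AgReach G c c' ∧ (∀ z ∈ Z, z ∉ Set.range c') ∧
      ∀ j, c' j = c j ∨ (c j ∈ K ∧ c' j ∈ K) := by
  intro n
  induction n with
  | zero =>
    intro c _ h0 _
    refine ⟨c, Relation.ReflTransGen.refl, ?_, fun j => Or.inl rfl⟩
    intro z hz hzr
    have := Finset.card_eq_zero.1 h0
    have hm : z ∈ Z.filter (fun z => z ∈ Set.range c) := Finset.mem_filter.2 ⟨hz, hzr⟩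
    rw [this] at hm
    simp at hm
  | succ n ih =>
    intro c hc hn hcard
    obtain ⟨z, hz⟩ := Finset.card_pos.1 (show 0 < (Z.filter (fun z => z ∈ Set.range c)).card by omega)
    obtain ⟨hzZ, hzr⟩ := Finset.mem_filter.1 hz
    obtain ⟨z', hz', hz'Z⟩ : ∃ z' ∈ Finset.univ.filter (fun v => v ∈ K ∧ v ∉ Set.range c),
        z' ∉ Z := by
      by_contra hcon
      push Not at hcon
      have : Finset.univ.filter (fun v => v ∈ K ∧ v ∉ Set.range c) ⊆ Z.erase z := by
        intro v hv
        refine Finset.mem_erase.2 ⟨?_, hcon v hv⟩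
        rintro rfl
        exact (Finset.mem_filter.1 hv).2.2 hzr
      have h1 := Finset.card_le_card this
      rw [Finset.card_erase_of_mem hzZ] at h1
      have := Finset.card_pos.2 ⟨z, hzZ⟩
      omega
    obtain ⟨-, hz'K, hz'r⟩ := Finset.mem_filter.1 hz'
    obtain ⟨p, hp⟩ := hK z z' (hZ z hzZ) hz'K
    obtain ⟨c1, hr1, hrange1, hj1⟩ := ag_shift p c hc hzr hz'r
    have hzz' : z ≠ z' := by rintro rfl; exact hz'r hzr
    have e1 : Z.filter (fun z => z ∈ Set.range c1) =
        (Z.filter (fun z => z ∈ Set.range c)).erase z := by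
      ext v
      simp only [Finset.mem_filter, Finset.mem_erase, hrange1, Set.mem_insert_iff, Set.mem_sdiff,
        Set.mem_singleton_iff]
      constructor
      · rintro ⟨h1, rfl | ⟨h2, h3⟩⟩
        · exact absurd h1 hz'Z
        · exact ⟨h3, h1, h2⟩
      · rintro ⟨h1, h2, h3⟩
        exact ⟨h2, Or.inr ⟨h3, h1⟩⟩
    have e2 : Finset.univ.filter (fun v => v ∈ K ∧ v ∉ Set.range c1) =
        insert z ((Finset.univ.filter (fun v => v ∈ K ∧ v ∉ Set.range c)).erase z') := by
      ext v
      simp only [Finset.mem_filter, Finset.mem_erase, hrange1, Set.mem_insert_iff, Set.mem_sdiff,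
        Set.mem_singleton_iff, Finset.mem_univ, true_and, Finset.mem_insert, not_or, not_and,
        not_not]
      constructor
      · rintro ⟨h1, h2, h3⟩
        by_cases hv : v = z
        · exact Or.inl hv
        · exact Or.inr ⟨h2, h1, fun h => hv (h3 h)⟩
      · rintro (rfl | ⟨h1, h2, h3⟩)
        · exact ⟨hZ _ hzZ, hzz', fun _ => rfl⟩
        · exact ⟨h2, h1, fun h => absurd h h3⟩
    obtain ⟨c2, hr2, hv2, hj2⟩ := ih c1 (ag_reach_inj hr1 hc)
      (by rw [e1, Finset.card_erase_of_mem hz, hn]; rfl) (by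
        rw [e2, Finset.card_insert_of_notMem, Finset.card_erase_of_mem hz']
        · have := Finset.card_pos.2 ⟨z', hz'⟩
          omega
        · intro h
          exact (Finset.mem_filter.1 (Finset.mem_erase.1 h).2).2.2 hzr)
    refine ⟨c2, ag_reach_trans hr1 hr2, hv2, ?_⟩
    intro j
    rcases hj1 j with a1 | ⟨a1, a1'⟩
    · rcases hj2 j with a2 | ⟨a2, a2'⟩
      · left; rw [a2, a1]
      · right; rw [a1] at a2; exact ⟨a2, a2'⟩
    · right
      refine ⟨hp _ a1, ?_⟩
      rcases hj2 j with a2 | ⟨a2, a2'⟩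
      · rw [a2]; exact hp _ a1'
      · exact a2'

lemma ag_swap {c : Fin k → V} (hc : Function.Injective c) {i j : Fin k} (hij : i ≠ j) {w u A b1 b2 : V}
    (hi : c i = w) (hj : c j = u) (hwu : G.Adj w u) (q : G.Walk w A)
    (h1 : G.Adj A b1) (h2 : G.Adj A b2) (hb : b1 ≠ b2) (hb1 : b1 ∉ q.support)
    (hb2 : b2 ∉ q.support) (hu1 : b1 ≠ u) (hu2 : b2 ≠ u)
    (hq : ∀ l, l ≠ i → c l ∉ q.support) (hl1 : ∀ l, c l ≠ b1) (hl2 : ∀ l, c l ≠ b2) :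
    ∃ c', AgReach G c c' ∧ c' i = u := by
  have r1 := ag_walk i (q.concat h1) c hc hi (by
    intro l hl
    rw [Walk.support_concat]
    simp only [List.concat_eq_append, List.mem_append, List.mem_singleton, not_or]
    exact ⟨hq l hl, hl1 l⟩)
  have hc1 := ag_reach_inj r1 hc
  set c1 := Function.update c i b1 with hc1def
  have c1i : c1 i = b1 := by simp [hc1def]
  have c1o : ∀ l, l ≠ i → c1 l = c l := fun l hl => by rw [hc1def, Function.update_of_ne hl]
  have r2 := ag_walk j (Walk.cons hwu.symm (q.concat h2)) c1 hc1 (by rw [c1o j hij.symm, hj]) (by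
    intro l hl
    rw [Walk.support_cons, Walk.support_concat]
    simp only [List.concat_eq_append, List.mem_cons, List.mem_append, List.mem_singleton,
      not_or, List.not_mem_nil, or_false]
    by_cases hli : l = i
    · rw [hli, c1i]
      exact ⟨hu1, hb1, hb⟩
    · rw [c1o l hli]
      exact ⟨fun h => hl (hc (h.trans hj.symm)), hq l hli, hl2 l⟩)
  have hc2 := ag_reach_inj r2 hc1
  set c2 := Function.update c1 j b2 with hc2def
  have c2j : c2 j = b2 := by simp [hc2def]
  have c2o : ∀ l, l ≠ j → c2 l = c1 l := fun l hl => by rw [hc2def, Function.update_of_ne hl]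
  have r3 := ag_walk i (Walk.cons h1.symm (q.reverse.concat hwu)) c2 hc2
    (by rw [c2o i hij, c1i]) (by
    intro l hl
    rw [Walk.support_cons, Walk.support_concat]
    simp only [List.concat_eq_append, List.mem_cons, List.mem_append, List.mem_singleton,
      not_or, List.not_mem_nil, or_false, Walk.support_reverse, List.mem_reverse]
    by_cases hlj : l = j
    · rw [hlj, c2j]
      exact ⟨hb.symm, hb2, hu2⟩
    · rw [c2o l hlj, c1o l hl]
      exact ⟨hl1 l, hq l hl, fun h => hlj (hc (h.trans hj.symm))⟩)
  exact ⟨_, ag_reach_trans r1 (ag_reach_trans r2 r3), by simp⟩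

end AgMoves

section AgLower

variable {V : Type*} {G : SimpleGraph V} [Fintype V] [DecidableRel G.Adj] {k : ℕ}

lemma ag_bare (hG : G.IsTree)
    (hYY : ∀ (x y : V) (p : G.Walk x y), IsYYPath G p → k + p.length + 2 ≤ Fintype.card V)
    (hLY : ∀ (x y : V) (p : G.Walk x y), IsLYPath G p → k + p.length + 1 ≤ Fintype.card V)
    {y : V} (hy : 3 ≤ G.degree y) :
    ∀ (m : ℕ) (w : V) (q : G.Walk w y), q.IsPath → Fintype.card V - q.length = m →
      (∀ z ∈ q.support, z ≠ w → z ≠ y → G.degree z = 2) →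
      k + q.length + 1 ≤ Fintype.card V ∧
        (2 ≤ G.degree w → k + q.length + 2 ≤ Fintype.card V) := by
  intro m
  induction m using Nat.strong_induction_on with
  | _ m ih =>
    intro w q hq hm hint
    by_cases h3 : 3 ≤ G.degree w
    · have := hYY w y q ⟨hq, h3, hy, hint⟩
      exact ⟨by omega, fun _ => this⟩
    by_cases h1 : G.degree w = 1
    · have := hLY w y q ⟨hq, h1, hy, hint⟩
      exact ⟨this, fun _ => by omega⟩
    cases q with
    | nil => exact absurd hy h3
    | @cons _ w1 _ h q' =>
      have hpos : 0 < G.degree w := (G.degree_pos_iff_exists_adj w).2 ⟨w1, h⟩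
      have h2 : G.degree w = 2 := by omega
      obtain ⟨w', hw', hne⟩ := ag_other (G := G) (v := w) (by omega) w1
      have hns : w' ∉ (Walk.cons h q').support := by
        intro hmem
        have := hG.isAcyclic.eq_snd_of_adj_start hq hw' hmem
        simp at this
        exact hne this
      have hlt := hq.length_lt
      have := ih (Fintype.card V - (Walk.cons hw'.symm (Walk.cons h q')).length)
        (by rw [Walk.length_cons]; omega) w' (Walk.cons hw'.symm (Walk.cons h q'))
        (hq.cons hns) rfl (by
          intro z hz hz1 hz2
          rw [Walk.support_cons, List.mem_cons] at hz
          by_cases hzw : z = w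
          · rw [hzw, h2]
          · exact hint z (hz.resolve_left hz1) hzw hz2)
      rw [Walk.length_cons] at this
      exact ⟨by omega, fun _ => by omega⟩

lemma ag_local (hG : G.IsTree)
    (hYY : ∀ (x y : V) (p : G.Walk x y), IsYYPath G p → k + p.length + 2 ≤ Fintype.card V)
    (hLY : ∀ (x y : V) (p : G.Walk x y), IsLYPath G p → k + p.length + 1 ≤ Fintype.card V)
    (hjoint : ∃ y, 3 ≤ G.degree y) (c : Fin k → V) (hc : Function.Injective c) (i : Fin k)
    (u : V) (hu : G.Adj (c i) u) : ∃ c', AgReach G c c' ∧ c' i = u := by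
  classical
  obtain ⟨w, hw⟩ : ∃ w, c i = w := ⟨_, rfl⟩
  rw [hw] at hu
  have conn : ∀ a, G.Adj w a → ∀ v v', v ∈ agSide G w a → v' ∈ agSide G w a →
      ∃ p : G.Walk v v', ∀ z ∈ p.support, z ∈ agSide G w a :=
    fun a ha v v' hv hv' => ag_side_walk' hG ha hv hv'
  by_cases hhole : ∃ v ∈ agSide G w u, v ∉ Set.range c
  · obtain ⟨v, hv, hvr⟩ := hhole
    obtain ⟨c1, hr1, hv1, hj1⟩ := ag_vacate (agSide G w u) (conn u hu) {u}
      (by simpa using ag_mem_side_self hu) _ c hc rfl (by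
        rw [Finset.card_singleton]
        exact Finset.card_pos.2 ⟨v, by simpa using ⟨hv, fun x hx => hvr ⟨x, hx⟩⟩⟩)
    have hi : c1 i = w := by
      rcases hj1 i with h | h
      · rw [h, hw]
      · exact absurd (hw ▸ h.1) ag_not_mem_side
    have hur : ∀ l, c1 l ≠ u := fun l hl => hv1 u (by simp) ⟨l, hl⟩
    refine ⟨Function.update c1 i u, ag_reach_trans hr1 (Relation.ReflTransGen.single
      ⟨ag_reach_inj hr1 hc, i, u, by rwa [hi], hur, rfl⟩), by simp⟩
  push Not at hhole
  obtain ⟨j, hj⟩ := hhole u (ag_mem_side_self hu)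
  have hij : i ≠ j := by
    rintro rfl
    exact hu.ne (hw.symm.trans hj)
  set Hs := Finset.univ.filter (fun v => v ∉ Set.range c) with hHs
  have hHscard : Hs.card + k = Fintype.card V := by
    have h2 : Hs = (Finset.univ.image c)ᶜ := by ext v; simp [hHs]
    have h3 := Fintype.card_le_of_injective c hc
    rw [Fintype.card_fin] at h3
    rw [h2, Finset.card_compl, Finset.card_image_of_injective _ hc, Finset.card_univ,
      Fintype.card_fin]
    omega
  obtain ⟨y0, hy0⟩ := hjoint
  have hk2 : k + 2 ≤ Fintype.card V := by
    simpa using hYY y0 y0 Walk.nil ⟨Walk.IsPath.nil, hy0, hy0, by simp⟩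
  obtain ⟨v, hv⟩ := Finset.card_pos.1 (show 0 < Hs.card by omega)
  have hHs' : ∀ v, v ∈ Hs ↔ v ∉ Set.range c := fun v => by simp [hHs]
  have hHw : ∀ v ∈ Hs, v ≠ w := by
    rintro v hv rfl
    exact (hHs' _).1 hv ⟨i, hw⟩
  have hHu : ∀ v ∈ Hs, ∀ a, v ∈ agSide G w a → a ≠ u := by
    rintro v hv a ha rfl
    exact (hHs' _).1 hv (hhole v ha)
  obtain ⟨a, ha, hva⟩ := ag_exists_side hG (hHw v hv)
  have hau := hHu v hv a hva
  have hdisj : ∀ b b', G.Adj w b → G.Adj w b' → b ≠ b' → b ∉ agSide G w b' := by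
    intro b b' hb hb' hne hmem
    exact hne (ag_side_unique hG hb hb' (ag_mem_side_self hb) hmem)
  by_cases hall : ∀ v' ∈ Hs, v' ∈ agSide G w a
  · have hdw : 2 ≤ G.degree w := ag_two ha hu hau
    by_cases hKj : ∃ A ∈ agSide G w a, 3 ≤ G.degree A
    · obtain ⟨A, hA, hAmin⟩ := Finset.exists_min_image
        (Finset.univ.filter (fun A => A ∈ agSide G w a ∧ 3 ≤ G.degree A)) (fun A => G.dist w A)
        (by obtain ⟨A, hA⟩ := hKj; exact ⟨A, by simpa using hA⟩)
      simp only [Finset.mem_filter, Finset.mem_univ, true_and] at hA hAmin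
      obtain ⟨hAK, hAdeg⟩ := hA
      obtain ⟨q, hq, hql⟩ := hG.connected.exists_path_of_dist w A
      have hqK : ∀ z ∈ q.support, z ≠ w → z ∈ agSide G w a := by
        intro z hz hzw
        by_contra hn
        have h1 := ag_dist_exit hG ha hAK hn
        have h2 := ag_mem_path_dist hG hq hz
        rw [dist_comm (u := A) (v := z), dist_comm (u := A) (v := w)] at h1
        exact hzw (hG.connected.dist_eq_zero_iff.1 (show G.dist w z = 0 by omega)).symm
      have hbd := (ag_bare hG hYY hLY hAdeg _ w q hq rfl (by
        intro z hz hzw hzA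
        have h1 := ag_interior_two hG hq hz hzw hzA
        by_contra hne
        have h2 := hAmin z ⟨hqK z hz hzw, by omega⟩
        have h3 := ag_mem_path_dist hG hq hz
        exact hzA (hG.connected.dist_eq_zero_iff.1 (show G.dist z A = 0 by omega)))).2 hdw
      have hAw : A ≠ w := by rintro rfl; exact ag_not_mem_side hAK
      obtain ⟨P, hP, hPd⟩ := ag_parent hG w hAw
      obtain ⟨b1, b2, hb1, hb2, hb1P, hb2P, hb⟩ := ag_other2 hAdeg P
      have hbd' : ∀ b, G.Adj A b → b ≠ P → G.dist w b = G.dist w A + 1 := by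
        intro b hb hbP
        rcases ag_step hG w hb with h | h
        · exact absurd (ag_parent_unique hG w hb.symm hP h hPd) hbP
        · exact h
      have hbK : ∀ b, G.Adj A b → b ≠ P → b ∈ agSide G w a := by
        intro b hb hbP
        by_contra hn
        have h1 := (ag_cross hG ha hAK hn hb).2
        have h2 := hbd' b hb hbP
        rw [h1, SimpleGraph.dist_self] at h2
        omega
      have hbq : ∀ b, G.Adj A b → b ≠ P → b ∉ q.support := by
        intro b hb hbP hmem
        have h1 := hbd' b hb hbP
        have h2 := ag_mem_path_dist hG hq hmem
        omega
      have huK : u ∉ agSide G w a := hdisj u a hu ha hau.symm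
      have hwK : w ∉ agSide G w a := ag_not_mem_side
      obtain ⟨c1, hr1, hv1, hj1⟩ := ag_vacate (agSide G w a) (conn a ha)
        ((q.support.toFinset.erase w) ∪ {b1, b2}) (by
          intro z hz
          simp only [Finset.mem_union, Finset.mem_erase, List.mem_toFinset, Finset.mem_insert,
            Finset.mem_singleton] at hz
          rcases hz with ⟨h1, h2⟩ | rfl | rfl
          · exact hqK z h2 h1
          · exact hbK _ hb1 hb1P
          · exact hbK _ hb2 hb2P) _ c hc rfl (by
          have e : Finset.univ.filter (fun v => v ∈ agSide G w a ∧ v ∉ Set.range c) = Hs := by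
            ext z
            simp only [Finset.mem_filter, Finset.mem_univ, true_and, hHs']
            exact ⟨fun h => h.2, fun h => ⟨hall z ((hHs' z).2 h), h⟩⟩
          rw [e]
          have h1 := Finset.card_union_le (q.support.toFinset.erase w) {b1, b2}
          have h2 : (q.support.toFinset.erase w).card = q.length := by
            rw [Finset.card_erase_of_mem (by simp), List.toFinset_card_of_nodup hq.support_nodup,
              Walk.length_support]; omega
          rw [Finset.card_pair hb] at h1
          omega)
      have fixed : ∀ l x, c l = x → x ∉ agSide G w a → c1 l = x := by
        intro l x hl hx
        rcases hj1 l with h | h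
        · rw [h, hl]
        · exact absurd (hl ▸ h.1) hx
      have hc1 := ag_reach_inj hr1 hc
      obtain ⟨c2, hr2, hc2⟩ := ag_swap hc1 hij (fixed i w hw hwK) (fixed j u hj huK) hu q hb1 hb2 hb
        (hbq b1 hb1 hb1P) (hbq b2 hb2 hb2P)
        (by rintro rfl; exact huK (hbK _ hb1 hb1P)) (by rintro rfl; exact huK (hbK _ hb2 hb2P))
        (by
          intro l hl hmem
          by_cases hlw : c1 l = w
          · exact hl (hc1 (hlw.trans (fixed i w hw hwK).symm))
          · exact hv1 (c1 l) (by simp [hlw, hmem]) ⟨l, rfl⟩)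
        (fun l hl => hv1 b1 (by simp) ⟨l, hl⟩) (fun l hl => hv1 b2 (by simp) ⟨l, hl⟩)
      exact ⟨c2, ag_reach_trans hr1 hr2, hc2⟩
    · exfalso
      push Not at hKj
      obtain ⟨y, hy, hymin⟩ := Finset.exists_min_image
        (Finset.univ.filter (fun A => 3 ≤ G.degree A)) (fun A => G.dist w A)
        ⟨y0, by simpa using hy0⟩
      simp only [Finset.mem_filter, Finset.mem_univ, true_and] at hy hymin
      have hyK : y ∉ agSide G w a := fun h => by have := hKj y h; omega
      have hbound : ∀ z ∈ agSide G w a, G.dist w z + k + 1 ≤ Fintype.card V := by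
        intro z hz
        obtain ⟨q, hq, hql⟩ := hG.connected.exists_path_of_dist z y
        have h0 := ag_dist_exit hG ha hz hyK
        have := (ag_bare hG hYY hLY hy _ z q hq rfl (by
          intro x hx hxz hxy
          have h1 := ag_interior_two hG hq hx hxz hxy
          by_contra hne
          have hxK : x ∉ agSide G w a := fun h => by have := hKj x h; omega
          have h2 := ag_mem_path_dist hG hq hx
          have h3 := ag_dist_exit hG ha hz hxK
          have h4 := hymin x (by omega)
          exact hxy (hG.connected.dist_eq_zero_iff.1 (show G.dist x y = 0 by omega)))).1
        rw [dist_comm (u := z) (v := w)] at h0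
        omega
      have hle : Hs.card ≤ (Finset.Icc 1 (Hs.card - 1)).card := by
        apply Finset.card_le_card_of_injOn (fun v => G.dist w v)
        · intro z hz
          have h1 := hbound z (hall z hz)
          have h2 := ag_side_dist hG ha (hall z hz)
          simp only [Finset.coe_Icc, Set.mem_Icc]
          omega
        · intro z hz z' hz' hzz'
          exact ag_side_inj hG ha (G.dist w z) (fun x hx _ => by have := hKj x hx; omega) _ z z'
            le_rfl (hall z hz) (hall z' hz') rfl hzz'.symm
      simp at hle
      omega
  · push Not at hall
    obtain ⟨v', hv', hv'a⟩ := hall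
    obtain ⟨a', ha', hva'⟩ := ag_exists_side hG (hHw v' hv')
    have haa' : a ≠ a' := by rintro rfl; exact hv'a hva'
    have hau' := hHu v' hv' a' hva'
    have vac : ∀ (d : Fin k → V), Function.Injective d → ∀ b, G.Adj w b →
        (∃ z ∈ agSide G w b, z ∉ Set.range d) → ∃ d', AgReach G d d' ∧ b ∉ Set.range d' ∧
        ∀ j, d' j = d j ∨ (d j ∈ agSide G w b ∧ d' j ∈ agSide G w b) := by
      intro d hd b hb ⟨z, hz, hzr⟩
      obtain ⟨d1, h1, h2, h3⟩ := ag_vacate (agSide G w b) (conn b hb) {b}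
        (by simpa using ag_mem_side_self hb) _ d hd rfl (by
          rw [Finset.card_singleton]
          exact Finset.card_pos.2 ⟨z, by simpa using ⟨hz, fun x hx => hzr ⟨x, hx⟩⟩⟩)
      exact ⟨d1, h1, h2 b (by simp), h3⟩
    obtain ⟨c1, hr1, hv1, hj1⟩ := vac c hc a ha ⟨v, hva, (hHs' v).1 hv⟩
    have hc1 := ag_reach_inj hr1 hc
    have keep : ∀ (d d' : Fin k → V) (b : V), (∀ j, d' j = d j ∨ (d j ∈ agSide G w b ∧
        d' j ∈ agSide G w b)) → ∀ x, x ∉ agSide G w b → x ∉ Set.range d → x ∉ Set.range d' := by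
      rintro d d' b hdd x hx hxr ⟨l, rfl⟩
      rcases hdd l with h | h
      · exact hxr ⟨l, h.symm⟩
      · exact hx h.2
    have fixed : ∀ (d d' : Fin k → V) (b : V), (∀ j, d' j = d j ∨ (d j ∈ agSide G w b ∧
        d' j ∈ agSide G w b)) → ∀ l x, x ∉ agSide G w b → d l = x → d' l = x := by
      intro d d' b hdd l x hx hl
      rcases hdd l with h | h
      · rw [h, hl]
      · exact absurd (hl ▸ h.1) hx
    have hv'r : v' ∉ Set.range c1 := keep c c1 a hj1 v' hv'a ((hHs' v').1 hv')
    obtain ⟨c2, hr2, hv2, hj2⟩ := vac c1 hc1 a' ha' ⟨v', hva', hv'r⟩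
    have hc2 := ag_reach_inj hr2 hc1
    have hv2a : a ∉ Set.range c2 := keep c1 c2 a' hj2 a (hdisj a a' ha ha' haa') hv1
    have hi2 : c2 i = w := fixed c1 c2 a' hj2 i w ag_not_mem_side
      (fixed c c1 a hj1 i w ag_not_mem_side hw)
    have hj2' : c2 j = u := fixed c1 c2 a' hj2 j u (hdisj u a' hu ha' hau'.symm)
      (fixed c c1 a hj1 j u (hdisj u a hu ha hau.symm) hj)
    obtain ⟨c3, hr3, hc3⟩ := ag_swap hc2 hij hi2 hj2' hu (Walk.nil : G.Walk w w) ha ha' haa'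
      (by simpa using ha.ne') (by simpa using ha'.ne') hau hau'
      (by
        intro l hl hmem
        rw [Walk.support_nil, List.mem_singleton] at hmem
        exact hl (hc2 (hmem.trans hi2.symm)))
      (fun l hl => hv2a ⟨l, hl⟩) (fun l hl => hv2 ⟨l, hl⟩)
    exact ⟨c3, ag_reach_trans hr1 (ag_reach_trans hr2 hr3), hc3⟩

/-- a schedule of moves -/
def AgSched (G : SimpleGraph V) {k : ℕ} (T : ℕ) (s : ℕ → Fin k → V) : Prop :=
  ∀ t < T, AgMove G (s t) (s (t + 1))

lemma ag_sched_append {G : SimpleGraph V} {T T' : ℕ} {s s' : ℕ → Fin k → V} (h : AgSched G T s)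
    (h' : AgSched G T' s') (e : s T = s' 0) :
    ∃ r : ℕ → Fin k → V, AgSched G (T + T') r ∧ (∀ t ≤ T, r t = s t) ∧
      (∀ t, r (T + t) = s' t) := by
  refine ⟨fun t => if t ≤ T then s t else s' (t - T), ?_, ?_, ?_⟩
  · intro t ht
    by_cases h1 : t + 1 ≤ T
    · simp only [h1, if_true, show t ≤ T by omega]
      exact h t (by omega)
    · by_cases h2 : t = T
      · subst h2
        simp only [h1, if_false, le_refl, if_true]
        rw [e, show t + 1 - t = 0 + 1 by omega]
        exact h' 0 (by omega)
      · simp only [h1, if_false, show ¬ t ≤ T by omega]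
        rw [show t + 1 - T = (t - T) + 1 by omega]
        exact h' _ (by omega)
  · intro t ht; simp [ht]
  · intro t
    rcases t with _ | t
    · simp [e]
    · simp

lemma ag_reach_sched {G : SimpleGraph V} {c c' : Fin k → V} (h : AgReach G c c') :
    ∃ T s, AgSched G T s ∧ s 0 = c ∧ s T = c' := by
  induction h with
  | refl => exact ⟨0, fun _ => c, fun t ht => absurd ht (by omega), rfl, rfl⟩
  | @tail b d _ hm ih =>
    obtain ⟨T, s, hs, h0, hT⟩ := ih
    obtain ⟨r, hr, hr1, hr2⟩ := ag_sched_append (T' := 1) (s' := fun t => if t = 0 then b else d) hs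
      (by
        intro t ht
        obtain rfl : t = 0 := by omega
        simpa using hm) (by simpa using hT)
    exact ⟨T + 1, r, hr, by rw [hr1 0 (by omega), h0], by rw [hr2 1]; simp⟩

lemma ag_agency (hG : G.IsTree) (hkn : k ≤ Fintype.card V)
    (hloc : ∀ (c : Fin k → V), Function.Injective c → ∀ i u, G.Adj (c i) u →
      ∃ c', AgReach G c c' ∧ c' i = u) :
    ∃ T : ℕ, ∃ a : Fin k → ℕ → V, FeasibleAgency G k T a := by
  classical
  obtain ⟨c0, hc0⟩ : ∃ c : Fin k → V, Function.Injective c := by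
    obtain ⟨e⟩ := Function.Embedding.nonempty_of_card_le (α := Fin k) (β := V) (by simpa using hkn)
    exact ⟨e, e.injective⟩
  have hwalk : ∀ (i : Fin k) (x y : V) (p : G.Walk x y) (c : Fin k → V), Function.Injective c →
      c i = x → ∃ c', AgReach G c c' ∧ c' i = y := by
    intro i x y p
    induction p with
    | nil => intro c _ h; exact ⟨c, Relation.ReflTransGen.refl, h⟩
    | @cons x z y h p ih =>
      intro c hc hi
      obtain ⟨c1, hr1, h1⟩ := hloc c hc i z (by rwa [hi])
      obtain ⟨c2, hr2, h2⟩ := ih c1 (ag_reach_inj hr1 hc) h1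
      exact ⟨c2, ag_reach_trans hr1 hr2, h2⟩
  have hF : ∀ F : Finset (Fin k × V), ∃ T s, AgSched G T s ∧ s 0 = c0 ∧ s T = c0 ∧
      ∀ x ∈ F, ∃ t ≤ T, s t x.1 = x.2 := by
    intro F
    induction F using Finset.induction_on with
    | empty => exact ⟨0, fun _ => c0, fun t ht => absurd ht (by omega), rfl, rfl, by simp⟩
    | insert x F _ ih =>
      obtain ⟨T, s, hs, h0, hT, hv⟩ := ih
      obtain ⟨p⟩ := hG.connected.preconnected (c0 x.1) x.2
      obtain ⟨c', hr, hc'⟩ := hwalk x.1 _ _ p c0 hc0 rfl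
      obtain ⟨T1, s1, hs1, h01, hT1⟩ := ag_reach_sched hr
      obtain ⟨T2, s2, hs2, h02, hT2⟩ := ag_reach_sched (ag_reach_symm hr)
      obtain ⟨r, hr', hra, hrb⟩ := ag_sched_append hs hs1 (by rw [hT, h01])
      obtain ⟨r2, hr2', hr2a, hr2b⟩ := ag_sched_append hr' hs2 (by rw [hrb, hT1, h02])
      refine ⟨T + T1 + T2, r2, hr2', ?_, ?_, ?_⟩
      · rw [hr2a 0 (by omega), hra 0 (by omega), h0]
      · rw [hr2b, hT2]
      · intro y hy
        rcases Finset.mem_insert.1 hy with rfl | hy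
        · exact ⟨T + T1, by omega, by rw [hr2a _ le_rfl, hrb, hT1, hc']⟩
        · obtain ⟨t, ht, hts⟩ := hv y hy
          exact ⟨t, by omega, by rw [hr2a t (by omega), hra t ht, hts]⟩
  obtain ⟨T, s, hs, h0, hT, hv⟩ := hF Finset.univ
  have hinj : ∀ t ≤ T, Function.Injective (s t) := by
    intro t ht
    rcases t with _ | t
    · rw [h0]; exact hc0
    · exact ag_move_inj (hs t (by omega))
  refine ⟨T, fun i t => s t i, ?_, ?_⟩
  · intro i
    refine ⟨?_, fun v => ?_, by show s 0 i = s T i; rw [h0, hT]⟩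
    · intro t ht
      obtain ⟨_, l, u, hadj, hu, e⟩ := hs t ht
      show s t i = s (t + 1) i ∨ G.Adj (s t i) (s (t + 1) i)
      rw [e]
      by_cases hl : i = l
      · subst hl
        right; simpa using hadj
      · left; rw [Function.update_of_ne hl]
    · exact hv (i, v) (Finset.mem_univ _)
  · intro i j hij
    refine ⟨fun t ht h => hij (hinj t ht h), ?_⟩
    rintro t ht ⟨h1, h2, h3⟩
    obtain ⟨_, l, u, hadj, hu, e⟩ := hs t ht
    change s (t + 1) i = s t j at h2
    change s t i ≠ s (t + 1) i at h3
    rw [e] at h2 h3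
    by_cases hl : i = l
    · subst hl
      simp only [Function.update_self] at h2
      exact hu j h2.symm
    · rw [Function.update_of_ne hl] at h3
      exact h3 rfl

lemma ag_ham (hG : G.IsTree) (hdeg : ∀ v, G.degree v ≤ 2) :
    ∃ (x y : V) (p : G.Walk x y), p.IsPath ∧ ∀ w, w ∈ p.support := by
  classical
  have : Nonempty V := hG.connected.nonempty
  obtain ⟨x, y, p, hp, hmax⟩ := Walk.exists_isPath_forall_isPath_length_le_length G
  refine ⟨x, y, p, hp, ?_⟩
  have closed : ∀ z v, z ∈ p.support → G.Adj z v → v ∈ p.support := by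
    intro z v hz hv
    by_contra hn
    by_cases hzx : z = x
    · subst hzx
      have := hmax _ _ (Walk.cons hv.symm p) (hp.cons hn)
      rw [Walk.length_cons] at this
      omega
    by_cases hzy : z = y
    · subst hzy
      have := hmax _ _ (Walk.cons hv.symm p.reverse) (hp.reverse.cons (by simpa using hn))
      rw [Walk.length_cons, Walk.length_reverse] at this
      omega
    obtain ⟨i, rfl, hi⟩ := Walk.mem_support_iff_exists_getVert.1 hz
    have hi0 : i ≠ 0 := by rintro rfl; simp at hzx
    have hiL : i < p.length := by
      rcases hi.lt_or_eq with h | h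
      · exact h
      · rw [h] at hzy; simp at hzy
    have a1 := p.adj_getVert_succ hiL
    have a2 := p.adj_getVert_succ (i := i - 1) (by omega)
    rw [show i - 1 + 1 = i by omega] at a2
    have := ag_three hv a1 a2.symm (by rintro rfl; exact hn (p.getVert_mem_support _))
      (by rintro rfl; exact hn (p.getVert_mem_support _)) (by
        intro h
        have := congrArg (G.dist x) h
        rw [ag_dist_getVert hG hp (by omega), ag_dist_getVert hG hp (by omega)] at this
        omega)
    have := hdeg (p.getVert i)
    omega
  intro w
  obtain ⟨q⟩ := hG.connected.preconnected x w
  have : ∀ (z w : V) (q : G.Walk z w), z ∈ p.support → w ∈ p.support := by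
    intro z w q
    induction q with
    | nil => exact id
    | cons h _ ih => exact fun hz => ih (closed _ _ hz h)
  exact this x w q (by simp)

end AgLower

/-- for a tree `G` on `n ≥ 2` vertices, the maximum number of
agents of a feasible agency equals the minimum of the quantities
`n - stretch_YY(G) - 1`, `n - stretch_LY(G)`, `n - stretch_LL(G) + 1`, taken
over those whose defining stretch exists.  Since each stretch is a maximum of
the number of vertices `p.length + 1` over the corresponding paths, this minimum
is the infimum of the corresponding per-path quantities over all Y–Y-paths,
L–Y-paths, and Hamiltonian paths. -/
theorem stmt15 {V : Type*} [Fintype V] (G : SimpleGraph V) [DecidableRel G.Adj]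
    (hG : G.IsTree) (hn : 2 ≤ Fintype.card V) :
    IsGreatest {k : ℕ | ∃ T : ℕ, ∃ a : Fin k → ℕ → V, FeasibleAgency G k T a}
      (sInf {m : ℕ |
        (∃ (x y : V) (p : G.Walk x y), IsYYPath G p ∧
            m = Fintype.card V - (p.length + 1) - 1) ∨
        (∃ (x y : V) (p : G.Walk x y), IsLYPath G p ∧
            m = Fintype.card V - (p.length + 1)) ∨
        ((∃ (x y : V) (p : G.Walk x y), p.IsPath ∧ (∀ w : V, w ∈ p.support)) ∧
            m = Fintype.card V - Fintype.card V + 1)}) := by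
  classical
  set S : Set ℕ := {m : ℕ |
        (∃ (x y : V) (p : G.Walk x y), IsYYPath G p ∧
            m = Fintype.card V - (p.length + 1) - 1) ∨
        (∃ (x y : V) (p : G.Walk x y), IsLYPath G p ∧
            m = Fintype.card V - (p.length + 1)) ∨
        ((∃ (x y : V) (p : G.Walk x y), p.IsPath ∧ (∀ w : V, w ∈ p.support)) ∧
            m = Fintype.card V - Fintype.card V + 1)} with hS
  constructor
  · by_cases hk1 : sInf S ≤ 1
    · apply ag_agency hG (by omega)
      intro c hc i u hu
      have hone : ∀ l, l = i := fun l => by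
        have := l.2; have := i.2; ext; omega
      refine ⟨Function.update c i u, Relation.ReflTransGen.single ⟨hc, i, u, hu, ?_, rfl⟩, by simp⟩
      intro l
      rw [hone l]; exact hu.ne
    · have hjoint : ∃ y, 3 ≤ G.degree y := by
        by_contra hcon
        push Not at hcon
        apply hk1
        apply Nat.sInf_le
        exact Or.inr (Or.inr ⟨ag_ham hG (fun v => by have := hcon v; omega), by omega⟩)
      have hYY : ∀ (x y : V) (p : G.Walk x y), IsYYPath G p →
          sInf S + p.length + 2 ≤ Fintype.card V := by
        intro x y p hp
        have : sInf S ≤ Fintype.card V - (p.length + 1) - 1 :=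
          Nat.sInf_le (Or.inl ⟨x, y, p, hp, rfl⟩)
        omega
      have hLY : ∀ (x y : V) (p : G.Walk x y), IsLYPath G p →
          sInf S + p.length + 1 ≤ Fintype.card V := by
        intro x y p hp
        have : sInf S ≤ Fintype.card V - (p.length + 1) :=
          Nat.sInf_le (Or.inr (Or.inl ⟨x, y, p, hp, rfl⟩))
        omega
      refine ag_agency hG ?_ (fun c hc i u hu => ag_local hG hYY hLY hjoint c hc i u hu)
      obtain ⟨y, hy⟩ := hjoint
      have := hYY y y Walk.nil ⟨Walk.IsPath.nil, hy, hy, by simp⟩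
      omega
  · rintro k ⟨T, a, ha⟩
    have hne : S.Nonempty := by
      by_cases hjoint : ∃ y, 3 ≤ G.degree y
      · obtain ⟨y, hy⟩ := hjoint
        exact ⟨_, Or.inl ⟨y, y, Walk.nil, ⟨Walk.IsPath.nil, hy, hy, by simp⟩, rfl⟩⟩
      · push Not at hjoint
        exact ⟨_, Or.inr (Or.inr ⟨ag_ham hG (fun v => by have := hjoint v; omega), rfl⟩)⟩
    by_contra hlt
    rcases Nat.sInf_mem hne with ⟨x, y, p, hp, hm⟩ | ⟨x, y, p, hp, hm⟩ | ⟨⟨x, y, p, hp, hall⟩, hm⟩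
    · exact ag_upper_YY hG hp a ha (by omega)
    · exact ag_upper_LY hG hp a ha (by omega)
    · exact ag_upper_LL hG hn hp hall a ha (by omega)
end

section
/- Let G be a tree on n ≥ 2 vertices and let a(0),…,a(T) be a tour in G. Then for every vertex v of G there are at least deg(v) distinct time units t ∈ {0,…,T−1} with a(t) = v, where deg(v) is the degree of v in G. -/
open SimpleGraph

theorem crossing_aux (P : ℕ → Prop) (s u : ℕ) (h : s ≤ u) (hs : ¬ P s) (hu : P u) :
    ∃ t, t < u ∧ ¬ P t ∧ P (t + 1) := by
  induction u, h using Nat.le_induction with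
  | base => exact absurd hu hs
  | succ n hn ih =>
    by_cases hp : P n
    · obtain ⟨t, h1, h2⟩ := ih hp
      exact ⟨t, by omega, h2⟩
    · exact ⟨n, by omega, hp, hu⟩

theorem edge_used {V : Type*} (G : SimpleGraph V) (hG : G.IsTree)
    (T : ℕ) (a : ℕ → V) (ha : AgencyTour G T a) (v w : V) (hvw : G.Adj v w) :
    ∃ t < T, a t = v ∧ a (t + 1) = w := by
  obtain ⟨h1, h2, h3⟩ := ha
  have hb := SimpleGraph.isAcyclic_iff_forall_adj_isBridge.1 hG.IsAcyclic hvw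
  rw [SimpleGraph.isBridge_iff] at hb
  let H := G.deleteEdges {s(v, w)}
  have hv : ¬ H.Reachable v w := by
    first | exact hb | exact hb.2
  let P : ℕ → Prop := fun t => H.Reachable (a t) w
  have key : ∃ t, t < T ∧ ¬ P t ∧ P (t + 1) := by
    obtain ⟨s, hs, hsv⟩ := h2 v
    obtain ⟨u, hu, huw⟩ := h2 w
    have ps : ¬ P s := by simpa [P, hsv] using hv
    have pu : P u := by simp [P, huw]
    by_cases h0 : P 0
    · have hT : P T := by simpa [P, h3] using h0
      exact crossing_aux P s T hs ps hT
    · obtain ⟨t, ht, h⟩ := crossing_aux P 0 u (Nat.zero_le _) h0 pu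
      exact ⟨t, by omega, h⟩
  obtain ⟨t, ht, hn, hp⟩ := key
  refine ⟨t, ht, ?_⟩
  rcases h1 t ht with h | h
  · exact absurd (by simpa [P, h] using hp) hn
  · by_cases he : s(a t, a (t + 1)) = s(v, w)
    · rcases Sym2.eq_iff.1 he with h | h
      · exact h
      · exact absurd (by simp [P, h.1]) hn
    · have hadj : H.Adj (a t) (a (t + 1)) := by
        rw [SimpleGraph.deleteEdges_adj]
        exact ⟨h, he⟩
      exact absurd (hadj.reachable.trans hp) hn

/-- in a tree on `n ≥ 2` vertices, any tour `a` with time horizon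
`T` visits every vertex `v` at least `deg v` times among the time units
`0, …, T - 1`. -/
theorem stmt16 {V : Type*} [Fintype V] [DecidableEq V] (G : SimpleGraph V)
    [DecidableRel G.Adj] (hG : G.IsTree) (hn : 2 ≤ Fintype.card V)
    (T : ℕ) (a : ℕ → V) (ha : AgencyTour G T a) (v : V) :
    G.degree v ≤ ((Finset.range T).filter fun t => a t = v).card := by
  have hsub : G.neighborFinset v ⊆
      ((Finset.range T).filter fun t => a t = v).image (fun t => a (t + 1)) := by
    intro w hw
    rw [SimpleGraph.mem_neighborFinset] at hw
    obtain ⟨t, ht, h1, h2⟩ := edge_used G hG T a ha v w hw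
    exact Finset.mem_image.2 ⟨t, by simp [ht, h1], h2⟩
  rw [← SimpleGraph.card_neighborFinset_eq_degree]
  exact (Finset.card_le_card hsub).trans Finset.card_image_le
end

section
/- Let G be a tree on n ≥ 2 vertices. Then every feasible agency in G with k agents and time horizon T satisfies T ≥ k · deg(v) for every vertex v of G; in particular T ≥ k · Δ(G), where Δ(G) is the maximum degree of G. -/
open SimpleGraph

lemma exit_step (P : ℕ → Prop) (s : ℕ) : ∀ d, P s → ¬ P (s + d) →
    ∃ t, s ≤ t ∧ t < s + d ∧ P t ∧ ¬ P (t + 1) := by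
  intro d
  induction d with
  | zero => intro h1 h2; exact absurd h1 h2
  | succ d ih =>
    intro h1 h2
    by_cases h3 : P (s + d)
    · exact ⟨s + d, by omega, by omega, h3, h2⟩
    · obtain ⟨t, ha, hb, hc⟩ := ih h1 h3
      exact ⟨t, ha, by omega, hc⟩

lemma exit_cyclic (P : ℕ → Prop) (T s t : ℕ) (hs : s ≤ T) (ht : t ≤ T) (h0 : P T → P 0)
    (hPs : P s) (hPt : ¬ P t) : ∃ r, r < T ∧ P r ∧ ¬ P (r + 1) := by
  have key : ∀ x y, x ≤ y → y ≤ T → P x → ¬ P y → ∃ r, r < T ∧ P r ∧ ¬ P (r + 1) := by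
    intro x y hxy hy hx hny
    obtain ⟨d, rfl⟩ := Nat.exists_eq_add_of_le hxy
    obtain ⟨r, _, h2, h3⟩ := exit_step P x d hx hny
    exact ⟨r, by omega, h3⟩
  by_cases hT : P T
  · exact key 0 t (Nat.zero_le _) ht (h0 hT) hPt
  · exact key s T hs le_rfl hPs hT

lemma tour_uses_edge {V : Type*} (G : SimpleGraph V) (hG : G.IsTree) (T : ℕ) (a : ℕ → V)
    (h : AgencyTour G T a) (v w : V) (hvw : G.Adj v w) :
    ∃ t, t < T ∧ a t = w ∧ a (t + 1) = v := by
  obtain ⟨hstep, hall, hcl⟩ := h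
  have hb := isAcyclic_iff_forall_adj_isBridge.mp hG.2 hvw.symm
  rw [isBridge_iff] at hb
  set H := G \ fromEdgeSet {s(w, v)} with hH
  have hb' : ¬ H.Reachable w v := by
    first | exact hb | exact hb.2
  obtain ⟨s, hs, hsw⟩ := hall w
  obtain ⟨t, ht, htv⟩ := hall v
  obtain ⟨r, hr, h1, h2⟩ := exit_cyclic (fun t => H.Reachable w (a t)) T s t hs ht
    (by simp only [hcl]; exact id) (by simp only [hsw]; exact Reachable.refl _)
    (by simpa only [htv] using hb')
  refine ⟨r, hr, ?_⟩
  rcases hstep r hr with he | hadj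
  · exact absurd (he ▸ h1) h2
  · by_cases hmem : s(a r, a (r + 1)) = s(w, v)
    · rcases Sym2.eq_iff.mp hmem with h3 | h3
      · exact h3
      · exact absurd (h3.1 ▸ h1) hb'
    · refine absurd (h1.trans (Adj.reachable ?_)) h2
      rw [hH, sdiff_adj, fromEdgeSet_adj]
      exact ⟨hadj, fun hc => hmem hc.1⟩

/-- in a tree on `n ≥ 2` vertices, every feasible agency with `k`
agents and time horizon `T` satisfies `T ≥ k * deg v` for every vertex `v`; in
particular `T ≥ k * Δ(G)` for the maximum degree `Δ(G)`. -/
theorem stmt17 {V : Type*} [Fintype V] (G : SimpleGraph V) [DecidableRel G.Adj]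
    (hG : G.IsTree) (hn : 2 ≤ Fintype.card V)
    (k T : ℕ) (a : Fin k → ℕ → V) (h : FeasibleAgency G k T a) :
    (∀ v : V, k * G.degree v ≤ T) ∧ k * G.maxDegree ≤ T := by
  have key : ∀ v : V, k * G.degree v ≤ T := by
    intro v
    choose f hf1 hf2 hf3 using fun (p : Fin k × G.neighborFinset v) =>
      tour_uses_edge G hG T (a p.1) (h.1 p.1) v p.2.1 ((G.mem_neighborFinset v _).mp p.2.2)
    have hinj : Function.Injective (fun p => (⟨f p, hf1 p⟩ : Fin T)) := by
      intro p q hpq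
      have hpq' : f p = f q := by simpa using hpq
      have h1 : p.1 = q.1 := by
        by_contra hne
        refine (h.2 p.1 q.1 hne).1 (f p + 1) (hf1 p) ?_
        rw [hf3 p, hpq', hf3 q]
      refine Prod.ext h1 (Subtype.ext ?_)
      rw [← hf2 p, ← hf2 q, h1, hpq']
    have := Fintype.card_le_of_injective _ hinj
    rw [Fintype.card_prod, Fintype.card_coe, Fintype.card_fin, Fintype.card_fin,
      G.card_neighborFinset_eq_degree] at this
    exact this
  refine ⟨key, ?_⟩
  have : Nonempty V := Fintype.card_pos_iff.mp (by omega)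
  obtain ⟨v, hv⟩ := G.exists_maximal_degree_vertex
  rw [hv]
  exact key v
end
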